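/- Let H be a Hamiltonian pattern of size k (i.e. a graph on [k] which, after relabelling vertices, contains the Hamiltonian cycle with edges (1,2),(2,3),…,(k−1,k),(k,1)), let ⋆ ∈ {ind, sub}, and assume k < 1 + 1/(3−τ). Then the vector with α_i = 0 for all i and β_{ij} = −1/d for all i < j is an optimal solution of the corresponding optimization problem, and there exists a constant I_G^⋆(H) ∈ (0,∞), depending on the parameters of the GIRG, such that N^⋆(H)/n converges in probability to I_G^⋆(H) as n → ∞. -/

import Mathlib

open MeasureTheory Filter Finset

noncomputable section

instance : Fact ((0:ℝ) < 1) := ⟨one_pos⟩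

/-- The `d`-dimensional torus `ℝ^d/ℤ^d`, with the sup of coordinatewise circle distances. -/
abbrev Torus (d : ℕ) := Fin d → AddCircle (1 : ℝ)

/-- Sample space of the GIRG on `n` vertices: weights, positions, and iid uniform
`[0,1]` coins deciding the presence of each potential edge. -/
abbrev GirgΩ (d n : ℕ) := (Fin n → ℝ) × (Fin n → Torus d) × (Sym2 (Fin n) → ℝ)

/-- The law of the randomness of the GIRG: iid weights with law `μW`, iid uniform positions
on the torus, iid uniform coins. -/
def girgMeasure (μW : Measure ℝ) (d n : ℕ) : Measure (GirgΩ d n) :=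
  (Measure.pi fun _ : Fin n => μW).prod
    ((Measure.pi fun _ : Fin n => (volume : Measure (Torus d))).prod
      (Measure.pi fun _ : Sym2 (Fin n) => volume.restrict (Set.Icc (0:ℝ) 1)))

/-- mean `μ = E[W]` of the weight distribution -/
def wMean (μW : Measure ℝ) : ℝ := ∫ x, x ∂μW

/-- Power-law tail assumption: `W ≥ 1` a.s. and `P(W > x) = c x^{1-τ} (1+o(1))` as `x → ∞`. -/
def WeightTail (τ c : ℝ) (μW : Measure ℝ) : Prop :=
  0 < c ∧ μW (Set.Iio 1) = 0 ∧
    Tendsto (fun x : ℝ => (μW (Set.Ioi x)).toReal / (c * x ^ (1 - τ))) atTop (nhds 1)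

/-- GIRG connection probability `min(1, (w_u w_v / (n μ ‖x_u - x_v‖^d))^γ)`. -/
def connProb (γ μbar : ℝ) (d n : ℕ) (w : Fin n → ℝ) (x : Fin n → Torus d)
    (u v : Fin n) : ℝ :=
  min 1 ((w u * w v / ((n : ℝ) * μbar * dist (x u) (x v) ^ d)) ^ γ)

/-- `u` and `v` are joined by an edge of the GIRG in outcome `ω`. -/
def girgEdge (γ μbar : ℝ) (d n : ℕ) (ω : GirgΩ d n) (u v : Fin n) : Prop :=
  u ≠ v ∧ ω.2.2 s(u, v) ≤ connProb γ μbar d n ω.1 ω.2.1 u v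

/-- the window `[ε t, t/ε]` -/
def windowIcc (ε t : ℝ) : Set ℝ := Set.Icc (ε * t) (t / ε)

/-- The set `M_ε^{(α,β)}` of ordered `k`-tuples of distinct vertices with prescribed
weights and inter-distances. -/
def Mset {k : ℕ} (ε : ℝ) (α : Fin k → ℝ) (β : Fin k → Fin k → ℝ) (d n : ℕ)
    (w : Fin n → ℝ) (x : Fin n → Torus d) : Set (Fin k → Fin n) :=
  {v | Function.Injective v ∧
    (∀ i, w (v i) ∈ windowIcc ε ((n : ℝ) ^ (α i))) ∧
    (∀ i j : Fin k, i < j → dist (x (v i)) (x (v j)) ∈ windowIcc ε ((n : ℝ) ^ (β i j)))}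

/-- `N^{sub}(H; M_ε^{(α,β)})` -/
def nSubM {k : ℕ} (H : SimpleGraph (Fin k)) (γ μbar ε : ℝ) (α : Fin k → ℝ)
    (β : Fin k → Fin k → ℝ) (d n : ℕ) (ω : GirgΩ d n) : ℕ :=
  Set.ncard {v : Fin k → Fin n | v ∈ Mset ε α β d n ω.1 ω.2.1 ∧
    ∀ i j : Fin k, H.Adj i j → girgEdge γ μbar d n ω (v i) (v j)}

/-- `N^{ind}(H; M_ε^{(α,β)})` -/
def nIndM {k : ℕ} (H : SimpleGraph (Fin k)) (γ μbar ε : ℝ) (α : Fin k → ℝ)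
    (β : Fin k → Fin k → ℝ) (d n : ℕ) (ω : GirgΩ d n) : ℕ :=
  Set.ncard {v : Fin k → Fin n | v ∈ Mset ε α β d n ω.1 ω.2.1 ∧
    ∀ i j : Fin k, i ≠ j → (H.Adj i j ↔ girgEdge γ μbar d n ω (v i) (v j))}

/-- `N^{sub}(H)` -/
def nSubTotal {k : ℕ} (H : SimpleGraph (Fin k)) (γ μbar : ℝ) (d n : ℕ)
    (ω : GirgΩ d n) : ℕ :=
  Set.ncard {v : Fin k → Fin n | Function.Injective v ∧
    ∀ i j : Fin k, H.Adj i j → girgEdge γ μbar d n ω (v i) (v j)}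

/-- `N^{ind}(H)` -/
def nIndTotal {k : ℕ} (H : SimpleGraph (Fin k)) (γ μbar : ℝ) (d n : ℕ)
    (ω : GirgΩ d n) : ℕ :=
  Set.ncard {v : Fin k → Fin n | Function.Injective v ∧
    ∀ i j : Fin k, i ≠ j → (H.Adj i j ↔ girgEdge γ μbar d n ω (v i) (v j))}

/-- `β` read as a symmetric matrix (only entries with `i < j` are meaningful). -/
def bsym {k : ℕ} (β : Fin k → Fin k → ℝ) (i j : Fin k) : ℝ := if i < j then β i j else β j i

/-- The feasible region `F`. -/
def Feasible (τ : ℝ) (d : ℕ) {k : ℕ} (α : Fin k → ℝ) (β : Fin k → Fin k → ℝ) : Prop :=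
  (∀ i, α i ∈ Set.Icc (0 : ℝ) (1 / (τ - 1))) ∧
  (∀ i j : Fin k, i < j → β i j ∈ Set.Icc (-(1 / (d : ℝ))) 0) ∧
  (∀ i j s : Fin k, i < j → s ≠ i → s ≠ j → β i j ≤ max (bsym β i s) (bsym β j s))

/-- `min_{i<j} β_{ij}` (with value `0 = sInf ∅` for the first vertex `j`,
which does not contribute). -/
def minBeta {k : ℕ} (β : Fin k → Fin k → ℝ) (j : Fin k) : ℝ :=
  sInf {x : ℝ | ∃ i, i < j ∧ x = β i j}

open scoped Classical in
/-- The exponent `f_H(α,β)`. -/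
def fExp (τ γ : ℝ) (d : ℕ) {k : ℕ} (H : SimpleGraph (Fin k))
    (α : Fin k → ℝ) (β : Fin k → Fin k → ℝ) : ℝ :=
  (k : ℝ) + (1 - τ) * ∑ i, α i + (d : ℝ) * ∑ j, minBeta β j +
    γ * ∑ p ∈ Finset.univ.filter (fun p : Fin k × Fin k => p.1 < p.2 ∧ H.Adj p.1 p.2),
        min (α p.1 + α p.2 - (d : ℝ) * β p.1 p.2 - 1) 0

/-- Extra constraints for the induced optimization problem:
`α_i + α_j ≤ 1 + d β_{ij}` for all non-edges. -/
def IndConstr (d : ℕ) {k : ℕ} (H : SimpleGraph (Fin k)) (α : Fin k → ℝ)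
    (β : Fin k → Fin k → ℝ) : Prop :=
  ∀ i j : Fin k, i < j → ¬H.Adj i j → α i + α j ≤ 1 + (d : ℝ) * β i j

/-- `(α,β)` is an optimal solution of the general optimization problem. -/
def IsOptimalSub (τ γ : ℝ) (d : ℕ) {k : ℕ} (H : SimpleGraph (Fin k))
    (α : Fin k → ℝ) (β : Fin k → Fin k → ℝ) : Prop :=
  Feasible τ d α β ∧
    ∀ α' β', Feasible τ d α' β' → fExp τ γ d H α' β' ≤ fExp τ γ d H α β

/-- `(α,β)` is an optimal solution of the induced optimization problem. -/
def IsOptimalInd (τ γ : ℝ) (d : ℕ) {k : ℕ} (H : SimpleGraph (Fin k))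
    (α : Fin k → ℝ) (β : Fin k → Fin k → ℝ) : Prop :=
  Feasible τ d α β ∧ IndConstr d H α β ∧
    ∀ α' β', Feasible τ d α' β' → IndConstr d H α' β' →
      fExp τ γ d H α' β' ≤ fExp τ γ d H α β

/-- the two kinds of subgraph counts -/
inductive StarKind | ind | sub

/-- `N^⋆(H; M_ε^{(α,β)})` -/
def starNM (s : StarKind) {k : ℕ} (H : SimpleGraph (Fin k)) (γ μbar ε : ℝ) (α : Fin k → ℝ)
    (β : Fin k → Fin k → ℝ) (d n : ℕ) (ω : GirgΩ d n) : ℕ :=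
  match s with
  | .sub => nSubM H γ μbar ε α β d n ω
  | .ind => nIndM H γ μbar ε α β d n ω

/-- `N^⋆(H)` -/
def starNTotal (s : StarKind) {k : ℕ} (H : SimpleGraph (Fin k)) (γ μbar : ℝ) (d n : ℕ)
    (ω : GirgΩ d n) : ℕ :=
  match s with
  | .sub => nSubTotal H γ μbar d n ω
  | .ind => nIndTotal H γ μbar d n ω

/-- optimality in the optimization problem corresponding to `⋆` -/
def starIsOptimal (s : StarKind) (τ γ : ℝ) (d : ℕ) {k : ℕ} (H : SimpleGraph (Fin k))
    (α : Fin k → ℝ) (β : Fin k → Fin k → ℝ) : Prop :=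
  match s with
  | .sub => IsOptimalSub τ γ d H α β
  | .ind => IsOptimalInd τ γ d H α β

/-- the optimal value `f_H^*` of the optimization problem corresponding to `⋆` -/
def starOptVal (s : StarKind) (τ γ : ℝ) (d : ℕ) {k : ℕ} (H : SimpleGraph (Fin k)) : ℝ :=
  match s with
  | .sub => sSup {x | ∃ α β, Feasible τ d α β ∧ x = fExp τ γ d H α β}
  | .ind => sSup {x | ∃ α β, Feasible τ d α β ∧ IndConstr d H α β ∧ x = fExp τ γ d H α β}

/-- `(α,β)` is the unique optimal solution (in the `α`-variables and the
`β`-variables with `i < j`). -/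
def UniquelyOptimal (s : StarKind) (τ γ : ℝ) (d : ℕ) {k : ℕ} (H : SimpleGraph (Fin k))
    (α : Fin k → ℝ) (β : Fin k → Fin k → ℝ) : Prop :=
  starIsOptimal s τ γ d H α β ∧
    ∀ α' β', starIsOptimal s τ γ d H α' β' →
      α' = α ∧ ∀ i j : Fin k, i < j → β' i j = β i j


/-- `H` is a Hamiltonian pattern: after relabelling the vertices it contains the
Hamiltonian cycle `(1,2),(2,3),…,(k-1,k),(k,1)`. -/
def IsHamiltonianPattern {k : ℕ} [NeZero k] (H : SimpleGraph (Fin k)) : Prop :=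
  ∃ σ : Equiv.Perm (Fin k), ∀ i : Fin k, H.Adj (σ i) (σ (i + 1))

/-!
Let the Hamiltonian cycle have `k = m + 1` vertices. Deleting any one of its edges leaves a
Hamiltonian path, and averaging a bound over the `k` paths obtained in this way charges every vertex
equally. For the optimization problem this gives `f_H(α, β) ≤ 1 + (2m/k - (τ - 1)) ∑ α_i`, which is
at most `1`, the value at `(0, -1/d)`, as soon as `k (3 - τ) ≤ 2`.

For the count, integrate out the positions along a path: conditionally on the weights, the expected
number of copies of `H` per vertex is at most a constant times the product of the `w_i w_j` over
the edges of the path. The geometric mean over the `k` paths is `∏ w_i ^ (2m/k)`, and the power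
`2m/k` is less than `τ - 1` when `k (3 - τ) < 2`, so this bound is integrable. By dominated
convergence the rescaled law of the distances within a copy then converges to a finite measure `L`.
Copies of diameter at most `R n^(-1/d)` concentrate, since their variance is `O(n)`; the remaining
ones are negligible by Markov's inequality, as `L` has little mass outside a large ball. Hence
`N(H) / n` converges in probability to the total mass of `L`.
-/

/-! ### The optimization problem -/

section Path

variable {V : Type*} (b : V → V → ℝ)

/-- The sum of `b` over the consecutive pairs of a list, i.e. the `b`-length of a path. -/
def pathSum : List V → ℝ
  | [] => 0
  | [_] => 0
  | u :: v :: l => b u v + pathSum (v :: l)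

theorem pathSum_ofFn (m : ℕ) (ρ : Fin (m + 1) → V) :
    pathSum b (List.ofFn ρ) = ∑ i : Fin m, b (ρ i.castSucc) (ρ i.succ) := by
  induction m with
  | zero => simp [pathSum]
  | succ m ih =>
    have tail := ih fun i => ρ i.succ
    rw [List.ofFn_succ] at tail
    rw [List.ofFn_succ, List.ofFn_succ, pathSum, tail, Fin.sum_univ_succ]
    rfl

variable {b}

theorem add_pathSum_append_le_pathSum_insert {v : V} {a : ℝ} (ha : a ≤ 0) (l₂ : List V) :
    ∀ l₁ : List V, (∀ x ∈ l₁ ++ l₂, a ≤ b x v ∧ a ≤ b v x) →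
      (l₁ ++ l₂).Pairwise (fun x y => b x y ≤ max (b x v) (b v y)) →
      a + pathSum b (l₁ ++ l₂) ≤ pathSum b (l₁ ++ v :: l₂)
  | [], hle, _ => by
    cases l₂ with
    | nil => simpa [pathSum] using ha
    | cons c l => simpa [pathSum] using (hle c (by simp)).2
  | [x], hle, hult => by
    cases l₂ with
    | nil => simpa [pathSum] using (hle x (by simp)).1
    | cons c l =>
      have hx := (hle x (by simp)).1
      have hc := (hle c (by simp)).2
      have hxc : b x c ≤ max (b x v) (b v c) := (List.pairwise_cons.mp hult).1 c (by simp)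
      simp only [List.cons_append, List.nil_append, pathSum]
      rcases le_max_iff.mp hxc with h | h <;> linarith
  | x :: y :: l, hle, hult => by
    have tail := add_pathSum_append_le_pathSum_insert ha l₂ (y :: l)
      (fun z hz => hle z (List.mem_cons_of_mem _ hz)) (List.pairwise_cons.mp hult).2
    simp only [List.cons_append, pathSum] at tail ⊢
    linarith

/- Remove the largest vertex `v` of the path: by the ultrametric inequality the edge that bridges
the gap is no longer than one of the two edges at `v`, and the other one is at least `M v`. -/
theorem sum_map_le_pathSum [LinearOrder V] {M : V → ℝ} (hsymm : ∀ i j, b i j = b j i)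
    (hult : ∀ i j s, i ≠ j → s ≠ i → s ≠ j → b i j ≤ max (b i s) (b j s))
    (hM₀ : ∀ j, M j ≤ 0) (hM : ∀ i j, i < j → M j ≤ b i j) (l : List V) (hl : l.Nodup) :
    (l.map M).sum ≤ pathSum b l := by
  induction hlen : l.length generalizing l with
  | zero => simp [List.length_eq_zero_iff.mp hlen, pathSum]
  | succ N ih =>
    have hne : l.toFinset.Nonempty := by
      rw [List.toFinset_nonempty_iff, ← List.length_pos_iff]; omega
    obtain ⟨v, hv, hmax⟩ := l.toFinset.exists_max_image id hne
    obtain ⟨l₁, l₂, rfl⟩ := List.append_of_mem (List.mem_toFinset.mp hv)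
    rw [List.nodup_middle, List.nodup_cons] at hl
    have hlt : ∀ x ∈ l₁ ++ l₂, x < v := fun x hx =>
      lt_of_le_of_ne (hmax x (by simp only [List.mem_toFinset, List.mem_append] at hx ⊢; grind))
        (ne_of_mem_of_not_mem hx hl.1)
    have hrest := ih (l₁ ++ l₂) hl.2 (by
      simp only [List.length_append, List.length_cons] at hlen ⊢; omega)
    have hinsert : M v + pathSum b (l₁ ++ l₂) ≤ pathSum b (l₁ ++ v :: l₂) := by
      refine add_pathSum_append_le_pathSum_insert (hM₀ v) l₂ l₁
        (fun x hx => ⟨hM x v (hlt x hx), hsymm x v ▸ hM x v (hlt x hx)⟩) ?_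
      refine hl.2.imp_of_mem fun {x y} hx hy hxy => ?_
      rw [hsymm v y]
      exact hult x y v hxy (hlt x hx).ne' (hlt y hy).ne'
    simp only [List.map_append, List.map_cons, List.sum_append, List.sum_cons] at hrest ⊢
    linarith

end Path

/-- The vertices `ρ 0, ρ 1, …, ρ m` form a Hamiltonian path of `H`. -/
def IsHamiltonianPath {m : ℕ} (H : SimpleGraph (Fin (m + 1))) (ρ : Equiv.Perm (Fin (m + 1))) :
    Prop :=
  ∀ i : Fin m, H.Adj (ρ i.castSucc) (ρ i.succ)

section HamiltonianPath

variable {m : ℕ} {H : SimpleGraph (Fin (m + 1))}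

theorem isHamiltonianPath_rotate {σ : Equiv.Perm (Fin (m + 1))}
    (hσ : ∀ i, H.Adj (σ i) (σ (i + 1))) (j : Fin (m + 1)) :
    IsHamiltonianPath H ((Equiv.addRight j).trans σ) := by
  intro i
  have hadj := hσ (i.castSucc + j)
  rwa [add_right_comm, Fin.coeSucc_eq_succ] at hadj

@[to_additive]
theorem prod_prod_rotate {M : Type*} [CommMonoid M] (σ : Equiv.Perm (Fin (m + 1)))
    (f : Fin (m + 1) → M) :
    ∏ j, ∏ i : Fin m, f (σ (i.castSucc + j)) * f (σ (i.succ + j)) = (∏ i, f i) ^ (2 * m) := by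
  have hrotate (i : Fin (m + 1)) : ∏ j, f (σ (i + j)) = ∏ i, f i :=
    ((Equiv.addLeft i).trans σ).prod_comp f
  rw [Finset.prod_comm]
  simp only [prod_mul_distrib, hrotate, prod_const, card_univ, Fintype.card_fin, ← pow_add,
    two_mul]

theorem pathEdge_injective (ρ : Equiv.Perm (Fin (m + 1))) :
    Function.Injective fun i : Fin m => s(ρ i.castSucc, ρ i.succ) := by
  intro i j h
  rcases Sym2.eq_iff.mp h with ⟨h, _⟩ | ⟨h₁, h₂⟩
  · exact Fin.castSucc_injective _ (ρ.injective h)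
  · have h₁ := congrArg Fin.val (ρ.injective h₁)
    have h₂ := congrArg Fin.val (ρ.injective h₂)
    simp only [Fin.val_castSucc, Fin.val_succ] at h₁ h₂
    omega

open scoped Classical in
theorem sum_edges_le_sum_path {ρ : Equiv.Perm (Fin (m + 1))} (hρ : IsHamiltonianPath H ρ)
    {φ : Sym2 (Fin (m + 1)) → ℝ} (hφ : ∀ e, φ e ≤ 0) :
    ∑ p : Fin (m + 1) × Fin (m + 1) with p.1 < p.2 ∧ H.Adj p.1 p.2, φ s(p.1, p.2) ≤
      ∑ i : Fin m, φ s(ρ i.castSucc, ρ i.succ) := by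
  have hinj : Set.InjOn (fun p : Fin (m + 1) × Fin (m + 1) => s(p.1, p.2))
      {p | p.1 < p.2 ∧ H.Adj p.1 p.2} := by
    rintro ⟨a, b⟩ ⟨hab, _⟩ ⟨a', b'⟩ ⟨hab', _⟩ h
    rcases Sym2.eq_iff.mp h with ⟨rfl, rfl⟩ | ⟨rfl, rfl⟩
    · rfl
    · exact absurd hab hab'.not_gt
  rw [← sum_image (f := φ) (by simpa using hinj),
    ← sum_image (f := φ) (pathEdge_injective ρ).injOn]
  refine sum_le_sum_of_subset_of_nonpos' (fun e he => ?_) fun e _ _ => hφ e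
  obtain ⟨i, -, rfl⟩ := mem_image.mp he
  simp only [mem_image, mem_filter, mem_univ, true_and, Prod.exists]
  rcases (hρ i).ne.lt_or_gt with h | h
  · exact ⟨_, _, ⟨h, hρ i⟩, rfl⟩
  · exact ⟨_, _, ⟨h, (hρ i).symm⟩, Sym2.eq_swap⟩

end HamiltonianPath

section Optimality

theorem bsym_comm {k : ℕ} (β : Fin k → Fin k → ℝ) (i j : Fin k) : bsym β i j = bsym β j i := by
  unfold bsym
  rcases lt_trichotomy i j with h | rfl | h
  · simp [h, h.not_gt]
  · rfl
  · simp [h, h.not_gt]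

theorem bsym_of_lt {k : ℕ} (β : Fin k → Fin k → ℝ) {i j : Fin k} (h : i < j) :
    bsym β i j = β i j :=
  if_pos h

theorem minBeta_le {k : ℕ} (β : Fin k → Fin k → ℝ) {i j : Fin k} (h : i < j) :
    minBeta β j ≤ β i j := by
  refine csInf_le ((Set.finite_range fun i => β i j).subset ?_).bddBelow ⟨i, h, rfl⟩
  rintro x ⟨i, _, rfl⟩
  exact ⟨i, rfl⟩

theorem minBeta_zero {m : ℕ} (β : Fin (m + 1) → Fin (m + 1) → ℝ) : minBeta β 0 = 0 := by
  simp [minBeta]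

theorem minBeta_const_succ {m : ℕ} (b : ℝ) (j : Fin m) :
    minBeta (fun _ _ : Fin (m + 1) => b) j.succ = b := by
  have hset : {x : ℝ | ∃ i, i < j.succ ∧ x = b} = {b} := by
    ext x
    exact ⟨fun ⟨_, _, h⟩ => h, fun h => ⟨0, j.succ_pos, h⟩⟩
  rw [minBeta, hset, csInf_singleton]

variable {m d : ℕ} {τ γ : ℝ} {H : SimpleGraph (Fin (m + 1))} {α : Fin (m + 1) → ℝ}
  {β : Fin (m + 1) → Fin (m + 1) → ℝ}

theorem Feasible.minBeta_nonpos (hF : Feasible τ d α β) (j : Fin (m + 1)) : minBeta β j ≤ 0 := by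
  rcases eq_or_ne j 0 with rfl | hj
  · exact (minBeta_zero β).le
  · exact (minBeta_le β (Fin.pos_of_ne_zero hj)).trans (hF.2.1 0 j (Fin.pos_of_ne_zero hj)).2

theorem Feasible.bsym_le_max (hF : Feasible τ d α β) (i j s : Fin (m + 1)) (hij : i ≠ j)
    (hsi : s ≠ i) (hsj : s ≠ j) : bsym β i j ≤ max (bsym β i s) (bsym β j s) := by
  rcases hij.lt_or_gt with h | h
  · exact bsym_of_lt β h ▸ hF.2.2 i j s h hsi hsj
  · rw [bsym_comm β i j, max_comm]
    exact bsym_of_lt β h ▸ hF.2.2 j i s h hsj hsi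

theorem Feasible.sum_minBeta_le (hF : Feasible τ d α β) (ρ : Equiv.Perm (Fin (m + 1))) :
    ∑ j, minBeta β j ≤ ∑ i : Fin m, bsym β (ρ i.castSucc) (ρ i.succ) := by
  have h := sum_map_le_pathSum (bsym_comm β) hF.bsym_le_max hF.minBeta_nonpos
    (fun i j hij => (minBeta_le β hij).trans_eq (bsym_of_lt β hij).symm)
    (List.ofFn ρ) (List.nodup_ofFn.mpr ρ.injective)
  rw [pathSum_ofFn, List.map_ofFn, List.sum_ofFn] at h
  exact (Equiv.sum_comp ρ (minBeta β)).symm.trans_le h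

open scoped Classical in
theorem sum_edgeCost_le_sum_path {ρ : Equiv.Perm (Fin (m + 1))} (hρ : IsHamiltonianPath H ρ) :
    ∑ p : Fin (m + 1) × Fin (m + 1) with p.1 < p.2 ∧ H.Adj p.1 p.2,
        min (α p.1 + α p.2 - (d : ℝ) * β p.1 p.2 - 1) 0 ≤
      ∑ i : Fin m, min (α (ρ i.castSucc) + α (ρ i.succ)
        - (d : ℝ) * bsym β (ρ i.castSucc) (ρ i.succ) - 1) 0 := by
  let φ : Sym2 (Fin (m + 1)) → ℝ :=
    Sym2.lift ⟨fun i j => min (α i + α j - (d : ℝ) * bsym β i j - 1) 0,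
      fun i j => by simp only [bsym_comm β i j, add_comm (α i)]⟩
  refine le_of_eq_of_le (sum_congr rfl fun p hp => ?_)
    (sum_edges_le_sum_path hρ (φ := φ) (Sym2.ind fun i j => min_le_right _ _))
  rw [← bsym_of_lt β (mem_filter.mp hp).2.1]
  rfl

theorem Feasible.fExp_le_path (hF : Feasible τ d α β) (hγ : 1 ≤ γ)
    {ρ : Equiv.Perm (Fin (m + 1))} (hρ : IsHamiltonianPath H ρ) :
    fExp τ γ d H α β ≤
      1 + (1 - τ) * ∑ i, α i + ∑ i : Fin m, (α (ρ i.castSucc) + α (ρ i.succ)) := by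
  classical
  set x : Fin m → ℝ := fun i => α (ρ i.castSucc) + α (ρ i.succ)
    - (d : ℝ) * bsym β (ρ i.castSucc) (ρ i.succ) - 1 with hx
  have hcost : γ * ∑ i, min (x i) 0 ≤ ∑ i, x i :=
    calc γ * ∑ i, min (x i) 0 ≤ ∑ i, min (x i) 0 :=
          mul_le_of_one_le_left (sum_nonpos fun i _ => min_le_right _ _) hγ
      _ ≤ ∑ i, x i := sum_le_sum fun i _ => min_le_left _ _
  have hedges := mul_le_mul_of_nonneg_left (sum_edgeCost_le_sum_path (α := α) (β := β) (d := d) hρ)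
    (zero_le_one.trans hγ)
  have hdist := mul_le_mul_of_nonneg_left (hF.sum_minBeta_le ρ) (Nat.cast_nonneg (α := ℝ) d)
  have hsum : ∑ i, x i = ∑ i : Fin m, (α (ρ i.castSucc) + α (ρ i.succ))
      - (d : ℝ) * ∑ i : Fin m, bsym β (ρ i.castSucc) (ρ i.succ) - m := by
    simp [hx, sum_sub_distrib, mul_sum]
  unfold fExp
  push_cast
  linarith

theorem fExp_geometric (hd : d ≠ 0) :
    fExp τ γ d H (fun _ => 0) (fun _ _ => -(1 / (d : ℝ))) = 1 := by
  have hd' : (d : ℝ) ≠ 0 := Nat.cast_ne_zero.mpr hd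
  simp only [fExp, Fin.sum_univ_succ (minBeta _), minBeta_zero, minBeta_const_succ]
  simp only [add_zero, sum_const_zero, mul_zero, sum_const, card_univ, Fintype.card_fin,
    nsmul_eq_mul, zero_add, mul_neg, sub_neg_eq_add, mul_one_div_cancel hd', sub_self,
    min_self]
  push_cast
  field_simp
  ring

theorem Feasible.fExp_le_one (hF : Feasible τ d α β) (hγ : 1 ≤ γ) {σ : Equiv.Perm (Fin (m + 1))}
    (hσ : ∀ i, H.Adj (σ i) (σ (i + 1))) (hm : (m + 1 : ℝ) * (3 - τ) ≤ 2) :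
    fExp τ γ d H α β ≤ 1 := by
  have hrot := sum_le_sum fun j (_ : j ∈ univ) => hF.fExp_le_path hγ (isHamiltonianPath_rotate hσ j)
  have havg := sum_sum_rotate σ α
  simp only [sum_add_distrib, sum_const, card_univ, Fintype.card_fin, nsmul_eq_mul,
    Equiv.trans_apply, Equiv.coe_addRight] at hrot havg
  have hα : 0 ≤ ∑ i, α i := sum_nonneg fun i _ => (hF.1 i).1
  push_cast at hrot havg
  rw [havg] at hrot
  have hm₀ : (0 : ℝ) < m + 1 := by positivity
  refine le_of_mul_le_mul_left ?_ hm₀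
  nlinarith

theorem feasible_geometric (hτ : 1 < τ) :
    Feasible τ d (fun _ : Fin (m + 1) => 0) (fun _ _ => -(1 / (d : ℝ))) := by
  refine ⟨fun i => ⟨le_rfl, (one_div_pos.mpr (sub_pos.mpr hτ)).le⟩,
    fun i j _ => ⟨le_rfl, ?_⟩, fun i j s _ _ _ => ?_⟩
  · exact neg_nonpos.mpr (by positivity)
  · simp [bsym]

theorem starIsOptimal_geometric (hd : d ≠ 0) (hτ : 1 < τ) (hγ : 1 ≤ γ)
    {σ : Equiv.Perm (Fin (m + 1))} (hσ : ∀ i, H.Adj (σ i) (σ (i + 1)))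
    (hm : (m + 1 : ℝ) * (3 - τ) ≤ 2) (s : StarKind) :
    starIsOptimal s τ γ d H (fun _ => 0) (fun _ _ => -(1 / (d : ℝ))) := by
  have hmax (α β) (hF : Feasible τ d α β) :
      fExp τ γ d H α β ≤ fExp τ γ d H (fun _ => 0) (fun _ _ => -(1 / (d : ℝ))) :=
    (hF.fExp_le_one hγ hσ hm).trans_eq (fExp_geometric hd).symm
  cases s with
  | sub => exact ⟨feasible_geometric hτ, hmax⟩
  | ind =>
    exact ⟨feasible_geometric hτ, fun i j _ _ => by simp [hd], fun α β hF _ => hmax α β hF⟩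

end Optimality

/-! ### Product measures -/

section ProductMeasure

theorem lintegral_fin_prod_eq_prod {X : Type*} [MeasurableSpace X] (μ : Measure X) [SigmaFinite μ]
    (n : ℕ) (f : Fin n → X → ENNReal) (hf : ∀ i, Measurable (f i)) :
    ∫⁻ x, ∏ i, f i (x i) ∂(Measure.pi fun _ : Fin n => μ) = ∏ i, ∫⁻ x, f i x ∂μ := by
  induction n with
  | zero => simp
  | succ n ih =>
    have hsplit := measurePreserving_piFinSuccAbove (fun _ : Fin (n + 1) => μ) 0
    calc ∫⁻ x, ∏ i, f i (x i) ∂(Measure.pi fun _ : Fin (n + 1) => μ)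
        = ∫⁻ p : X × (Fin n → X), f 0 p.1 * ∏ i : Fin n, f i.succ (p.2 i)
            ∂(μ.prod (Measure.pi fun _ => μ)) := by
          rw [← hsplit.lintegral_comp (by fun_prop)]
          exact lintegral_congr fun x => Fin.prod_univ_succ _
      _ = (∫⁻ x, f 0 x ∂μ) * ∏ i : Fin n, ∫⁻ x, f i.succ x ∂μ := by
          rw [lintegral_prod_mul (g := fun x : Fin n → X => ∏ i : Fin n, f i.succ (x i))
            (hf 0).aemeasurable (Measurable.aemeasurable (by fun_prop)), ih _ fun i => hf i.succ]
      _ = ∏ i, ∫⁻ x, f i x ∂μ := (Fin.prod_univ_succ fun i => ∫⁻ x, f i x ∂μ).symm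

theorem measurePreserving_pi_comp_injective {ι κ X : Type*} [Fintype ι] [Fintype κ]
    [MeasurableSpace X] (μ : Measure X) [IsProbabilityMeasure μ] {e : κ → ι}
    (he : Function.Injective e) :
    MeasurePreserving (fun (f : ι → X) j => f (e j)) (Measure.pi fun _ => μ)
      (Measure.pi fun _ => μ) := by
  refine ⟨by fun_prop, ?_⟩
  have hindep := (ProbabilityTheory.iIndepFun_pi (μ := fun _ : ι => μ) (X := fun _ x => x)
    fun _ => aemeasurable_id).precomp he
  rw [hindep.map_fun_eq_pi_map fun i => (measurable_pi_apply (e i)).aemeasurable]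
  congr with i : 1
  exact (measurePreserving_eval (fun _ : ι => μ) (e i)).map_eq

theorem measurePreserving_pi_comp_pair {ι κ κ' X : Type*} [Fintype ι] [Fintype κ] [Fintype κ']
    [MeasurableSpace X] (μ : Measure X) [IsProbabilityMeasure μ] {u : κ → ι} {v : κ' → ι}
    (hu : Function.Injective u) (hv : Function.Injective v) (huv : ∀ i j, u i ≠ v j) :
    MeasurePreserving (fun f : ι → X => (fun j => f (u j), fun j => f (v j)))
      (Measure.pi fun _ => μ) ((Measure.pi fun _ => μ).prod (Measure.pi fun _ => μ)) :=
  (measurePreserving_sumPiEquivProdPi fun _ : κ ⊕ κ' => μ).comp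
    (measurePreserving_pi_comp_injective μ (hu.sumElim hv huv))

theorem measurePreserving_prod_prod_prod_comm {A B C D : Type*} [MeasurableSpace A]
    [MeasurableSpace B] [MeasurableSpace C] [MeasurableSpace D] (a : Measure A) (b : Measure B)
    (c : Measure C) (e : Measure D) [SFinite a] [SFinite b] [SFinite c] [SFinite e] :
    MeasurePreserving (fun p : (A × B) × (C × D) => ((p.1.1, p.2.1), (p.1.2, p.2.2)))
      ((a.prod b).prod (c.prod e)) ((a.prod c).prod (b.prod e)) := by
  have hinner : MeasurePreserving (fun p : B × (C × D) => (p.2.1, (p.1, p.2.2)))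
      (b.prod (c.prod e)) (c.prod (b.prod e)) :=
    (measurePreserving_prodAssoc c b e).comp
      ((Measure.measurePreserving_swap.prod (MeasurePreserving.id e)).comp
        (measurePreserving_prodAssoc b c e).symm)
  exact (measurePreserving_prodAssoc a c (b.prod e)).symm.comp
    (((MeasurePreserving.id a).prod hinner).comp (measurePreserving_prodAssoc a b (c.prod e)))

theorem measurePreserving_add_partialSum {G : Type*} [AddCommGroup G] [MeasurableSpace G]
    [MeasurableAdd₂ G] (μ : Measure G) [SigmaFinite μ] [μ.IsAddLeftInvariant] (m : ℕ) :
    MeasurePreserving (fun (p : G × (Fin m → G)) i => p.1 + Fin.partialSum p.2 i)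
      (μ.prod (Measure.pi fun _ : Fin m => μ)) (Measure.pi fun _ : Fin (m + 1) => μ) := by
  induction m with
  | zero =>
    convert (measurePreserving_piFinSuccAbove (fun _ : Fin 1 => μ) 0).symm with p i
    rw [Fin.eq_zero i, Fin.partialSum_zero, add_zero]
    rfl
  | succ m ih =>
    have hsplit := measurePreserving_piFinSuccAbove (fun _ : Fin (m + 1) => μ) 0
    have hshear : MeasurePreserving (fun p : G × (G × (Fin m → G)) => (p.1, (p.1 + p.2.1, p.2.2)))
        (μ.prod (μ.prod (Measure.pi fun _ => μ))) (μ.prod (μ.prod (Measure.pi fun _ => μ))) :=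
      (measurePreserving_prodAssoc μ μ _).comp
        (((measurePreserving_prod_add μ μ).prod (MeasurePreserving.id _)).comp
          (measurePreserving_prodAssoc μ μ _).symm)
    convert (measurePreserving_piFinSuccAbove (fun _ : Fin (m + 2) => μ) 0).symm.comp
      (((MeasurePreserving.id μ).prod ih).comp
        (hshear.comp ((MeasurePreserving.id μ).prod hsplit))) with p i
    refine i.cases ?_ fun j => ?_
    · rw [Fin.partialSum_zero, add_zero]
      rfl
    · rw [Fin.partialSum_succ', ← add_assoc]
      rfl

end ProductMeasure

/-! ### Patterns on `k` vertices -/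

section Pattern

/-- The connection probability of two vertices at rescaled distance `r` whose weights have
normalised product `a`; the rescaling turns the factor `n` of `connProb` into `1`. -/
def edgeProb (γ : ℝ) (d : ℕ) (a r : ℝ) : ℝ := min 1 ((a / r ^ d) ^ γ)

@[fun_prop]
theorem measurable_edgeProb {Ω : Type*} [MeasurableSpace Ω] {γ : ℝ} {d : ℕ} {f g : Ω → ℝ}
    (hf : Measurable f) (hg : Measurable g) : Measurable fun ω => edgeProb γ d (f ω) (g ω) := by
  unfold edgeProb
  fun_prop

theorem edgeProb_pos {γ : ℝ} {d : ℕ} {a r : ℝ} (ha : 0 < a) (hr : 0 < r) :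
    0 < edgeProb γ d a r :=
  lt_min zero_lt_one (by positivity)

theorem edgeProb_lt_one {γ : ℝ} {d : ℕ} {a r : ℝ} (hγ : 0 < γ) (ha : 0 ≤ a) (har : a < r ^ d) :
    edgeProb γ d a r < 1 :=
  min_lt_of_right_lt <| Real.rpow_lt_one (div_nonneg ha (ha.trans har.le))
    ((div_lt_one (ha.trans_lt har)).mpr har) hγ

theorem connProb_eq_edgeProb {d n : ℕ} (hd : d ≠ 0) (γ μb : ℝ) (w : Fin n → ℝ)
    (x : Fin n → Torus d) (u v : Fin n) :
    connProb γ μb d n w x u v =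
      edgeProb γ d (w u * w v / μb) ((n : ℝ) ^ (1 / (d : ℝ)) * dist (x u) (x v)) := by
  rw [connProb, edgeProb, mul_pow, one_div, Real.rpow_inv_natCast_pow n.cast_nonneg hd, div_div]
  ring_nf

/-- The relation `E` realises the graph `H` as a subgraph, or as an induced subgraph. -/
def IsPattern (s : StarKind) {V : Type*} (H : SimpleGraph V) (E : V → V → Prop) : Prop :=
  match s with
  | .sub => ∀ i j, H.Adj i j → E i j
  | .ind => ∀ i j, i ≠ j → (H.Adj i j ↔ E i j)

variable {s : StarKind}

theorem IsPattern.of_adj {V : Type*} {H : SimpleGraph V} {E : V → V → Prop}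
    (h : IsPattern s H E) {i j : V} (hij : H.Adj i j) : E i j := by
  cases s with
  | sub => exact h i j hij
  | ind => exact (h i j hij.ne).mp hij

theorem isPattern_of_forall_ne {V : Type*} {H : SimpleGraph V} {E : V → V → Prop}
    (h : ∀ i j, i ≠ j → (H.Adj i j ↔ E i j)) : IsPattern s H E := by
  cases s with
  | sub => exact fun i j hij => (h i j hij.ne).mp hij
  | ind => exact h

theorem isPattern_congr {V : Type*} {H : SimpleGraph V} {E E' : V → V → Prop}
    (h : ∀ i j, i ≠ j → (E i j ↔ E' i j)) : IsPattern s H E ↔ IsPattern s H E' := by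
  cases s with
  | sub => exact forall₂_congr fun i j => imp_congr_right fun hij => h i j hij.ne
  | ind => exact forall₂_congr fun i j => imp_congr_right fun hij => iff_congr Iff.rfl (h i j hij)

theorem measurableSet_isPattern {V Ω : Type*} [Countable V] [MeasurableSpace Ω]
    {H : SimpleGraph V} {E : Ω → V → V → Prop} (hE : ∀ i j, MeasurableSet {ω | E ω i j}) :
    MeasurableSet {ω | IsPattern s H (E ω)} := by
  have hE' (i j) : Measurable fun ω => E ω i j := measurableSet_setOfPred.mp (hE i j)
  cases s with
  | sub => exact measurableSet_setOfPred.mpr <| .forall fun i => .forall fun j =>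
      measurable_const.imp (hE' i j)
  | ind => exact measurableSet_setOfPred.mpr <| .forall fun i => .forall fun j =>
      measurable_const.imp (measurable_const.iff (hE' i j))

instance isProbabilityMeasure_coin :
    IsProbabilityMeasure (volume.restrict (Set.Icc (0 : ℝ) 1)) :=
  ⟨by simp⟩

theorem volume_restrict_Icc_Iic_le (p : ℝ) :
    volume.restrict (Set.Icc (0 : ℝ) 1) (Set.Iic p) ≤ ENNReal.ofReal p := by
  rw [Measure.restrict_apply measurableSet_Iic]
  calc volume (Set.Iic p ∩ Set.Icc 0 1) ≤ volume (Set.Icc 0 p) :=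
        measure_mono fun t ht => ⟨ht.2.1, ht.1⟩
    _ = ENNReal.ofReal p := by simp

theorem volume_restrict_Icc_ne_zero {p : ℝ} (hp : p ∈ Set.Ioo (0 : ℝ) 1) {J : Set ℝ}
    (hJ : Set.Iic p ⊆ J ∨ Set.Ioi p ⊆ J) : volume.restrict (Set.Icc (0 : ℝ) 1) J ≠ 0 := by
  obtain ⟨hp₀, hp₁⟩ := hp
  suffices h : ∃ a b, a < b ∧ Set.Ioc a b ⊆ J ∩ Set.Icc 0 1 by
    obtain ⟨a, b, hab, hsub⟩ := h
    rw [Measure.restrict_apply' measurableSet_Icc]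
    refine ((?_ : (0 : ENNReal) < volume (Set.Ioc a b)).trans_le (measure_mono hsub)).ne'
    simpa using hab
  rcases hJ with h | h
  · exact ⟨0, p, hp₀, fun t ht => ⟨h ht.2, ht.1.le, ht.2.trans hp₁.le⟩⟩
  · exact ⟨p, 1, hp₁, fun t ht => ⟨h ht.1, hp₀.le.trans ht.1.le, ht.2⟩⟩

variable {k d : ℕ} {γ μb : ℝ}

/-- `ω` realises `H` on `k` vertices with weights `w` and matrix `D` of rescaled distances when the
coin of each pair is compared with `edgeProb`. -/
def IsPatternOf (s : StarKind) (H : SimpleGraph (Fin k)) (γ μb : ℝ) (d : ℕ) (w : Fin k → ℝ)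
    (D : Fin k → Fin k → ℝ) (c : Sym2 (Fin k) → ℝ) : Prop :=
  IsPattern s H fun i j => c s(i, j) ≤ edgeProb γ d (w i * w j / μb) (D i j)

/-- The probability, over the coins alone, that `k` vertices with weights `w` and matrix `D` of
rescaled distances realise `H`. -/
def patternProb (s : StarKind) (H : SimpleGraph (Fin k)) (γ μb : ℝ) (d : ℕ) (w : Fin k → ℝ)
    (D : Fin k → Fin k → ℝ) : ENNReal :=
  Measure.pi (fun _ : Sym2 (Fin k) => volume.restrict (Set.Icc (0 : ℝ) 1))
    {c | IsPatternOf s H γ μb d w D c}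

variable {H : SimpleGraph (Fin k)}

theorem measurableSet_isPatternOf :
    MeasurableSet {p : ((Fin k → ℝ) × (Fin k → Fin k → ℝ)) × (Sym2 (Fin k) → ℝ) |
      IsPatternOf s H γ μb d p.1.1 p.1.2 p.2} :=
  measurableSet_isPattern fun i j => measurableSet_le (by fun_prop) (by fun_prop)

theorem measurable_patternProb :
    Measurable fun p : (Fin k → ℝ) × (Fin k → Fin k → ℝ) => patternProb s H γ μb d p.1 p.2 :=
  measurable_measure_prodMk_left measurableSet_isPatternOf

theorem measurable_patternProb_right (w : Fin k → ℝ) :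
    Measurable (patternProb s H γ μb d w) :=
  measurable_patternProb.of_uncurry_left

theorem patternProb_le_prod_path {m : ℕ} {H : SimpleGraph (Fin (m + 1))}
    {ρ : Equiv.Perm (Fin (m + 1))} (hρ : IsHamiltonianPath H ρ) (w : Fin (m + 1) → ℝ)
    (D : Fin (m + 1) → Fin (m + 1) → ℝ) :
    patternProb s H γ μb d w D ≤ ∏ i : Fin m, ENNReal.ofReal
      (edgeProb γ d (w (ρ i.castSucc) * w (ρ i.succ) / μb) (D (ρ i.castSucc) (ρ i.succ))) := by
  let p : Fin m → ℝ := fun i =>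
    edgeProb γ d (w (ρ i.castSucc) * w (ρ i.succ) / μb) (D (ρ i.castSucc) (ρ i.succ))
  have hsub : {c | IsPatternOf s H γ μb d w D c} ⊆
      (fun c i => c s(ρ (Fin.castSucc i), ρ i.succ)) ⁻¹' Set.univ.pi fun i => Set.Iic (p i) :=
    fun c hc i _ => hc.of_adj (hρ i)
  refine (measure_mono hsub).trans ?_
  rw [(measurePreserving_pi_comp_injective _ (pathEdge_injective ρ)).measure_preimage
    (MeasurableSet.univ_pi fun _ => measurableSet_Iic).nullMeasurableSet, Measure.pi_pi]
  exact prod_le_prod' fun i _ => volume_restrict_Icc_Iic_le (p i)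

theorem patternProb_pos (hγ : 0 < γ) (hμ : 0 < μb) {w : Fin k → ℝ} (hw : ∀ i, 0 < w i)
    {D : Fin k → Fin k → ℝ} (hsymm : ∀ i j, D i j = D j i) (hD₀ : ∀ i j, i ≠ j → 0 < D i j)
    (hD : ∀ i j, i ≠ j → w i * w j / μb < D i j ^ d) : 0 < patternProb s H γ μb d w D := by
  let p : Sym2 (Fin k) → ℝ := Sym2.lift ⟨fun i j => edgeProb γ d (w i * w j / μb) (D i j),
    fun i j => by simp only [hsymm i j, mul_comm (w i)]⟩
  have hprod : (Set.univ.pi fun e => {t | e.IsDiag ∨ (e ∈ H.edgeSet ↔ t ≤ p e)}) ⊆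
      {c | IsPatternOf s H γ μb d w D c} := fun c hc => isPattern_of_forall_ne fun i j hij =>
    (hc s(i, j) trivial).resolve_left (mt Sym2.mk_isDiag_iff.mp hij)
  refine lt_of_lt_of_le ?_ (measure_mono hprod)
  rw [Measure.pi_pi, pos_iff_ne_zero, prod_ne_zero_iff]
  rintro e -
  by_cases hdiag : e.IsDiag
  · simp [hdiag]
  · have hp : p e ∈ Set.Ioo (0 : ℝ) 1 := by
      induction e with | _ i j =>
      have hij : i ≠ j := mt Sym2.mk_isDiag_iff.mpr hdiag
      have ha : 0 < w i * w j / μb := div_pos (mul_pos (hw i) (hw j)) hμ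
      exact ⟨edgeProb_pos ha (hD₀ i j hij), edgeProb_lt_one hγ ha.le (hD i j hij)⟩
    refine volume_restrict_Icc_ne_zero hp ?_
    by_cases he : e ∈ H.edgeSet
    · exact .inl fun t ht => .inr (iff_of_true he ht)
    · exact .inr fun t ht => .inr (iff_of_false he (not_le.mpr ht))

end Pattern

/-! ### Unwrapping the torus along a Hamiltonian path -/

section Torus

instance isProbabilityMeasure_circle :
    IsProbabilityMeasure (volume : Measure (AddCircle (1 : ℝ))) :=
  ⟨by simp [AddCircle.measure_univ]⟩

theorem lintegral_comp_inv_smul {E : Type*} [NormedAddCommGroup E] [NormedSpace ℝ E]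
    [MeasurableSpace E] [BorelSpace E] [FiniteDimensional ℝ E] (μ : Measure E) [μ.IsAddHaarMeasure]
    {f : E → ENNReal} (hf : Measurable f) {N : ℝ} (hN : 0 < N) :
    ∫⁻ y, f (N⁻¹ • y) ∂μ = ENNReal.ofReal (N ^ Module.finrank ℝ E) * ∫⁻ y, f y ∂μ := by
  rw [← lintegral_map hf (measurable_const_smul _), Measure.map_addHaar_smul μ (inv_ne_zero hN.ne'),
    lintegral_smul_measure, inv_pow, inv_inv, abs_of_pos (by positivity), smul_eq_mul]

/-- The quotient map `ℝ^d → ℝ^d/ℤ^d`. -/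
def toTorus (d : ℕ) : (Fin d → ℝ) →+ Torus d :=
  (QuotientAddGroup.mk' (AddSubgroup.zmultiples (1 : ℝ))).compLeft (Fin d)

variable {d m : ℕ}

theorem measurable_toTorus : Measurable (toTorus d) :=
  measurable_pi_lambda _ fun a => AddCircle.measurable_mk'.comp (measurable_pi_apply a)

theorem norm_toTorus_of_norm_le {y : Fin d → ℝ} (hy : ‖y‖ ≤ 1 / 2) : ‖toTorus d y‖ = ‖y‖ := by
  have hcoord (a : Fin d) : ‖toTorus d y a‖₊ = ‖y a‖₊ := by
    refine NNReal.eq ((AddCircle.norm_coe_eq_abs_iff (1 : ℝ) one_ne_zero).mpr ?_)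
    simpa using (norm_le_pi_norm y a).trans hy
  simp only [Pi.norm_def, hcoord]

/-- The cube `(-N/2, N/2]^d` in each of the `m` components: a fundamental domain of `(NT^d)^m`. -/
def fundamentalBox (m d : ℕ) (N : ℝ) : Set (Fin m → Fin d → ℝ) :=
  Set.univ.pi fun _ => Set.univ.pi fun _ => Set.Ioc (-(N / 2)) (N / 2)

theorem measurableSet_fundamentalBox (N : ℝ) : MeasurableSet (fundamentalBox m d N) :=
  .univ_pi fun _ => .univ_pi fun _ => measurableSet_Ioc

theorem norm_le_of_mem_fundamentalBox {N : ℝ} (hN : 0 ≤ N) {y : Fin m → Fin d → ℝ}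
    (hy : y ∈ fundamentalBox m d N) (i : Fin m) : ‖y i‖ ≤ N / 2 :=
  (pi_norm_le_iff_of_nonneg (by positivity)).mpr fun a =>
    abs_le.mpr ⟨(hy i trivial a trivial).1.le, (hy i trivial a trivial).2⟩

theorem inv_smul_mem_fundamentalBox_one {N : ℝ} (hN : 0 < N) (y : Fin m → Fin d → ℝ) :
    N⁻¹ • y ∈ fundamentalBox m d 1 ↔ y ∈ fundamentalBox m d N := by
  have hcoord (t : ℝ) : N⁻¹ * t ∈ Set.Ioc (-(1 / 2)) (1 / 2) ↔ t ∈ Set.Ioc (-(N / 2)) (N / 2) := by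
    rw [Set.mem_Ioc, Set.mem_Ioc, lt_inv_mul_iff₀ hN, inv_mul_le_iff₀ hN]
    ring_nf
  simp only [fundamentalBox, Set.mem_univ_pi, Pi.smul_apply, smul_eq_mul, hcoord]

theorem measurePreserving_toTorus_pi (m d : ℕ) :
    MeasurePreserving (fun (y : Fin m → Fin d → ℝ) i => toTorus d (y i))
      (volume.restrict (fundamentalBox m d 1)) (Measure.pi fun _ => volume) := by
  have hcircle : MeasurePreserving ((↑) : ℝ → AddCircle (1 : ℝ))
      (volume.restrict (Set.Ioc (-(1 / 2)) (1 / 2))) volume := by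
    have := AddCircle.measurePreserving_mk (1 : ℝ) (-(1 / 2))
    norm_num at this ⊢
    exact this
  have htorus : MeasurePreserving (toTorus d)
      (volume.restrict (Set.univ.pi fun _ => Set.Ioc (-(1 / 2)) (1 / 2))) volume := by
    rw [volume_pi, Measure.restrict_pi_pi (fun _ : Fin d => (volume : Measure ℝ))]
    exact measurePreserving_pi (fun _ : Fin d => volume.restrict (Set.Ioc (-(1 / 2) : ℝ) (1 / 2)))
      (fun _ => (volume : Measure (AddCircle (1 : ℝ)))) fun _ => hcircle
  rw [fundamentalBox, volume_pi, Measure.restrict_pi_pi]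
  exact measurePreserving_pi
    (fun _ : Fin m => volume.restrict (Set.univ.pi fun _ => Set.Ioc (-(1 / 2) : ℝ) (1 / 2)))
    (fun _ => (volume : Measure (Torus d))) fun _ => htorus

theorem ofReal_pow_mul_lintegral_torus {N : ℝ} (hN : 0 < N) {g : (Fin m → Torus d) → ENNReal}
    (hg : Measurable g) :
    ENNReal.ofReal (N ^ (m * d)) * ∫⁻ z, g z ∂(Measure.pi fun _ => volume) =
      ∫⁻ y in fundamentalBox m d N, g fun i => toTorus d (N⁻¹ • y i) := by
  have hcomp : Measurable fun y : Fin m → Fin d → ℝ => g fun i => toTorus d (y i) :=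
    hg.comp (measurable_pi_lambda _ fun i => measurable_toTorus.comp (measurable_pi_apply i))
  have hbox := measurableSet_fundamentalBox (m := m) (d := d)
  have hrank : Module.finrank ℝ (Fin m → Fin d → ℝ) = m * d := by
    simp [Module.finrank_pi_fintype]
  rw [← (measurePreserving_toTorus_pi m d).lintegral_comp hg, ← lintegral_indicator (hbox 1),
    ← hrank, ← lintegral_comp_inv_smul _ (hcomp.indicator (hbox 1)) hN,
    ← lintegral_indicator (hbox N)]
  refine lintegral_congr fun y => ?_
  classical
  simp only [Set.indicator_apply, inv_smul_mem_fundamentalBox_one hN, Pi.smul_apply]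

end Torus

section PathPosition

variable {m d : ℕ} (ρ : Equiv.Perm (Fin (m + 1)))

/-- The positions of the vertices when the path `ρ 0, ρ 1, …` starts at `0` and has increments
`z`. -/
def pathPosition {G : Type*} [AddMonoid G] (z : Fin m → G) (i : Fin (m + 1)) : G :=
  Fin.partialSum z (ρ.symm i)

theorem pathPosition_succ {G : Type*} [AddMonoid G] (z : Fin m → G) (i : Fin m) :
    pathPosition ρ z (ρ i.succ) = pathPosition ρ z (ρ i.castSucc) + z i := by
  simp only [pathPosition, Equiv.symm_apply_apply, Fin.partialSum_succ]

theorem map_pathPosition {G G' : Type*} [AddMonoid G] [AddMonoid G'] (f : G →+ G') (z : Fin m → G)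
    (i : Fin (m + 1)) : f (pathPosition ρ z i) = pathPosition ρ (fun j => f (z j)) i := by
  simp [pathPosition, Fin.partialSum, map_list_sum, List.map_take, List.map_ofFn, Function.comp_def]

@[fun_prop]
theorem continuous_pathPosition {G : Type*} [AddMonoid G] [TopologicalSpace G] [ContinuousAdd G]
    (i : Fin (m + 1)) : Continuous fun z : Fin m → G => pathPosition ρ z i := by
  obtain ⟨i, rfl⟩ := ρ.surjective i
  induction i using Fin.induction with
  | zero => simpa [pathPosition] using continuous_const
  | succ i ih =>
    simp only [pathPosition_succ]
    fun_prop

/-- The matrix of distances between the points of a tuple, scaled by `N`. -/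
def scaledDist {k : ℕ} (N : ℝ) (x : Fin k → Torus d) (i j : Fin k) : ℝ := N * dist (x i) (x j)

/-- The distance matrix of the path in `ℝ^d` with increments `y`. -/
def pathDist (y : Fin m → Fin d → ℝ) (i j : Fin (m + 1)) : ℝ :=
  ‖pathPosition ρ y i - pathPosition ρ y j‖

/-- The distance matrix of the path with increments `y`, wrapped around the torus `ℝ^d/(Nℤ)^d`. -/
def wrappedDist (N : ℝ) (y : Fin m → Fin d → ℝ) (i j : Fin (m + 1)) : ℝ :=
  N * ‖toTorus d (N⁻¹ • (pathPosition ρ y i - pathPosition ρ y j))‖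

theorem measurable_scaledDist {k : ℕ} (N : ℝ) :
    Measurable (scaledDist N : (Fin k → Torus d) → Fin k → Fin k → ℝ) :=
  measurable_pi_lambda _ fun i => measurable_pi_lambda _ fun j => by
    unfold scaledDist; fun_prop

theorem continuous_pathDist : Continuous (pathDist (d := d) ρ) :=
  continuous_pi fun i => continuous_pi fun j => by
    unfold pathDist; fun_prop

theorem measurable_wrappedDist (N : ℝ) : Measurable (wrappedDist (d := d) ρ N) :=
  measurable_pi_lambda _ fun i => measurable_pi_lambda _ fun j => by
    have hpos (i) := (continuous_pathPosition (G := Fin d → ℝ) ρ i).measurable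
    have htorus := measurable_toTorus (d := d)
    unfold wrappedDist; fun_prop

variable {ρ}

theorem wrappedDist_eq_pathDist {N : ℝ} (hN : 0 < N) {y : Fin m → Fin d → ℝ} {i j : Fin (m + 1)}
    (h : pathDist ρ y i j ≤ N / 2) : wrappedDist ρ N y i j = pathDist ρ y i j := by
  have hnorm : ‖N⁻¹ • (pathPosition ρ y i - pathPosition ρ y j)‖ = N⁻¹ * pathDist ρ y i j := by
    rw [norm_smul, Real.norm_of_nonneg (inv_nonneg.mpr hN.le), pathDist]
  rw [wrappedDist, norm_toTorus_of_norm_le, hnorm, mul_inv_cancel_left₀ hN.ne']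
  rw [hnorm, inv_mul_le_iff₀ hN]
  linarith

theorem pathDist_castSucc_succ (y : Fin m → Fin d → ℝ) (i : Fin m) :
    pathDist ρ y (ρ i.castSucc) (ρ i.succ) = ‖y i‖ := by
  rw [pathDist, pathPosition_succ, sub_add_cancel_left, norm_neg]

theorem wrappedDist_castSucc_succ {N : ℝ} (hN : 0 < N) {y : Fin m → Fin d → ℝ}
    (hy : y ∈ fundamentalBox m d N) (i : Fin m) :
    wrappedDist ρ N y (ρ i.castSucc) (ρ i.succ) = ‖y i‖ := by
  rw [wrappedDist_eq_pathDist hN, pathDist_castSucc_succ]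
  rw [pathDist_castSucc_succ]
  exact norm_le_of_mem_fundamentalBox hN.le hy i

theorem eventually_wrappedDist_eq_pathDist (y : Fin m → Fin d → ℝ) :
    ∀ᶠ N in atTop, y ∈ fundamentalBox m d N ∧ wrappedDist ρ N y = pathDist ρ y := by
  have hdist (i j) : ∀ᶠ N : ℝ in atTop, pathDist ρ y i j ≤ N / 2 :=
    (tendsto_id.atTop_div_const two_pos).eventually_ge_atTop _
  have hbox (i a) : ∀ᶠ N : ℝ in atTop, |y i a| < N / 2 :=
    (tendsto_id.atTop_div_const two_pos).eventually_gt_atTop _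
  filter_upwards [eventually_gt_atTop 0, eventually_all.mpr fun i => eventually_all.mpr (hdist i),
    eventually_all.mpr fun i => eventually_all.mpr (hbox i)] with N hN hle hlt
  refine ⟨fun i _ a _ => ⟨(abs_lt.mp (hlt i a)).1, (abs_lt.mp (hlt i a)).2.le⟩, ?_⟩
  ext i j
  exact wrappedDist_eq_pathDist hN (hle i j)

/- Translation invariance fixes the first vertex of the path; the remaining positions are then
determined by the increments, which are independent and uniform. -/
theorem ofReal_pow_mul_lintegral_scaledDist (ρ : Equiv.Perm (Fin (m + 1))) {N : ℝ} (hN : 0 < N)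
    {F : (Fin (m + 1) → Fin (m + 1) → ℝ) → ENNReal} (hF : Measurable F) :
    ENNReal.ofReal (N ^ (m * d)) *
        ∫⁻ x : Fin (m + 1) → Torus d, F (scaledDist N x) ∂(Measure.pi fun _ => volume) =
      ∫⁻ y in fundamentalBox m d N, F (wrappedDist ρ N y) := by
  have hpath : MeasurePreserving
      (fun (p : Torus d × (Fin m → Torus d)) i => p.1 + pathPosition ρ p.2 i)
      (volume.prod (Measure.pi fun _ => volume)) (Measure.pi fun _ => volume) :=
    (measurePreserving_pi_comp_injective _ ρ.symm.injective).comp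
      (measurePreserving_add_partialSum volume m)
  have hmeas : Measurable fun z : Fin m → Torus d => F (scaledDist N (pathPosition ρ z)) :=
    hF.comp <| (measurable_scaledDist N).comp <| measurable_pi_lambda _ fun i =>
      (continuous_pathPosition ρ i).measurable
  have htranslate (p : Torus d × (Fin m → Torus d)) :
      scaledDist N (fun i => p.1 + pathPosition ρ p.2 i) = scaledDist N (pathPosition ρ p.2) := by
    ext i j
    simp only [scaledDist, dist_add_left]
  rw [← hpath.lintegral_comp (f := fun x => F (scaledDist N x))
    (hF.comp (measurable_scaledDist N))]
  simp only [htranslate]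
  rw [measurePreserving_snd.lintegral_comp hmeas, ofReal_pow_mul_lintegral_torus hN hmeas]
  refine lintegral_congr fun y => congrArg F ?_
  ext i j
  have hmap (i) : pathPosition ρ (fun l => toTorus d (N⁻¹ • y l)) i =
      toTorus d (N⁻¹ • pathPosition ρ y i) :=
    (map_pathPosition ρ ((toTorus d).comp (DistribSMul.toAddMonoidHom _ N⁻¹)) y i).symm
  rw [scaledDist, wrappedDist, hmap, hmap, dist_eq_norm, ← map_sub, smul_sub]

end PathPosition

/-! ### Expected pattern counts -/

section EdgeMass

variable {d : ℕ} {γ : ℝ}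

/-- The integral over `ℝ^d` of the connection probability of two vertices whose weights have
normalised product `1`. -/
def edgeMass (γ : ℝ) (d : ℕ) : ENNReal := ∫⁻ y : Fin d → ℝ, ENNReal.ofReal (edgeProb γ d 1 ‖y‖)

theorem edgeProb_one_le (hγ : 0 ≤ γ) {r : ℝ} (hr : 0 ≤ r) :
    edgeProb γ d 1 r ≤ 2 ^ (d * γ) * (1 + r) ^ (-(d * γ)) := by
  have hdγ : 0 ≤ d * γ := by positivity
  rw [Real.rpow_neg (by positivity), ← div_eq_mul_inv,
    ← Real.div_rpow zero_le_two (by positivity)]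
  rcases le_total r 1 with hr₁ | hr₁
  · exact (min_le_left _ _).trans (Real.one_le_rpow (by rw [one_le_div₀] <;> linarith) hdγ)
  · have hinv : 1 / r ≤ 2 / (1 + r) := by rw [div_le_div_iff₀] <;> linarith
    calc edgeProb γ d 1 r ≤ (1 / r ^ d) ^ γ := min_le_right _ _
      _ = (1 / r) ^ (d * γ) := by
        rw [Real.rpow_natCast_mul (by positivity), div_pow, one_pow]
      _ ≤ (2 / (1 + r)) ^ (d * γ) := Real.rpow_le_rpow (by positivity) hinv hdγ

theorem edgeMass_lt_top (hd : d ≠ 0) (hγ : 1 < γ) : edgeMass γ d < ⊤ := by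
  have hd₀ : (0 : ℝ) < d := by positivity
  have hrank : (Module.finrank ℝ (Fin d → ℝ) : ℝ) < d * γ := by
    rw [Module.finrank_fin_fun]
    exact lt_mul_of_one_lt_right hd₀ hγ
  calc edgeMass γ d
      ≤ ∫⁻ y : Fin d → ℝ, ENNReal.ofReal (2 ^ (d * γ)) *
          ENNReal.ofReal ((1 + ‖y‖) ^ (-(d * γ))) := lintegral_mono fun y => by
        rw [← ENNReal.ofReal_mul (by positivity)]
        exact ENNReal.ofReal_le_ofReal (edgeProb_one_le (by positivity) (norm_nonneg y))
    _ = ENNReal.ofReal (2 ^ (d * γ)) * ∫⁻ y : Fin d → ℝ,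
          ENNReal.ofReal ((1 + ‖y‖) ^ (-(d * γ))) := lintegral_const_mul _ (by fun_prop)
    _ < ⊤ := ENNReal.mul_lt_top ENNReal.ofReal_lt_top (finite_integral_one_add_norm hrank)

theorem lintegral_edgeProb_norm (hd : d ≠ 0) {a : ℝ} (ha : 0 < a) :
    ∫⁻ y : Fin d → ℝ, ENNReal.ofReal (edgeProb γ d a ‖y‖) = ENNReal.ofReal a * edgeMass γ d := by
  obtain ⟨N, hN, rfl⟩ : ∃ N : ℝ, 0 < N ∧ N ^ d = a :=
    ⟨a ^ (1 / (d : ℝ)), by positivity, by rw [one_div, Real.rpow_inv_natCast_pow ha.le hd]⟩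
  have hscale (y : Fin d → ℝ) : edgeProb γ d (N ^ d) ‖y‖ = edgeProb γ d 1 ‖N⁻¹ • y‖ := by
    rw [edgeProb, edgeProb, norm_smul, Real.norm_of_nonneg (by positivity), mul_pow, inv_pow,
      one_div, mul_inv, inv_inv, div_eq_mul_inv]
  simp only [hscale]
  rw [lintegral_comp_inv_smul volume
    (f := fun y : Fin d → ℝ => ENNReal.ofReal (edgeProb γ d 1 ‖y‖)) (by fun_prop) hN,
    Module.finrank_fin_fun, edgeMass]

end EdgeMass

section ScaledMass

variable {m d : ℕ} {γ μb : ℝ} {s : StarKind} {H : SimpleGraph (Fin (m + 1))}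

/-- `patternProb` restricted to distance matrices in `B`. -/
def patternProbOn {k : ℕ} (s : StarKind) (H : SimpleGraph (Fin k)) (γ μb : ℝ) (d : ℕ)
    (B : Set (Fin k → Fin k → ℝ)) (w : Fin k → ℝ) : (Fin k → Fin k → ℝ) → ENNReal :=
  B.indicator (patternProb s H γ μb d w)

theorem measurable_patternProbOn {k : ℕ} {H : SimpleGraph (Fin k)}
    {B : Set (Fin k → Fin k → ℝ)} (hB : MeasurableSet B) :
    Measurable fun p : (Fin k → ℝ) × (Fin k → Fin k → ℝ) => patternProbOn s H γ μb d B p.1 p.2 :=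
  measurable_patternProb.indicator (measurable_snd hB)

theorem measurable_patternProbOn_right {k : ℕ} {H : SimpleGraph (Fin k)}
    {B : Set (Fin k → Fin k → ℝ)} (hB : MeasurableSet B) (w : Fin k → ℝ) :
    Measurable (patternProbOn s H γ μb d B w) :=
  (measurable_patternProbOn hB).of_uncurry_left

/-- `N^(md)` times the probability that `m + 1` vertices with weights `w` and uniform positions
realise `H` and have a scaled distance matrix in `B`. -/
def scaledMass (s : StarKind) (H : SimpleGraph (Fin (m + 1))) (γ μb : ℝ) (d : ℕ) (N : ℝ)
    (B : Set (Fin (m + 1) → Fin (m + 1) → ℝ)) (w : Fin (m + 1) → ℝ) : ENNReal :=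
  ENNReal.ofReal (N ^ (m * d)) * ∫⁻ x : Fin (m + 1) → Torus d,
    patternProbOn s H γ μb d B w (scaledDist N x) ∂(Measure.pi fun _ => volume)

theorem measurable_scaledMass (N : ℝ) {B : Set (Fin (m + 1) → Fin (m + 1) → ℝ)}
    (hB : MeasurableSet B) : Measurable (scaledMass s H γ μb d N B) :=
  (Measurable.lintegral_prod_right' ((measurable_patternProbOn hB).comp
    (measurable_fst.prodMk ((measurable_scaledDist N).comp measurable_snd)))).const_mul _

variable {w : Fin (m + 1) → ℝ} {ρ : Equiv.Perm (Fin (m + 1))}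

theorem scaledMass_eq (ρ : Equiv.Perm (Fin (m + 1))) {N : ℝ} (hN : 0 < N)
    {B : Set (Fin (m + 1) → Fin (m + 1) → ℝ)} (hB : MeasurableSet B) :
    scaledMass s H γ μb d N B w = ∫⁻ y, (fundamentalBox m d N).indicator
      (fun y => patternProbOn s H γ μb d B w (wrappedDist ρ N y)) y := by
  rw [lintegral_indicator (measurableSet_fundamentalBox N)]
  exact ofReal_pow_mul_lintegral_scaledDist ρ hN (measurable_patternProbOn_right hB w)

/-- The product of the connection probabilities along the path `ρ` with increments `y`. -/
def pathEdgeProb (γ μb : ℝ) (w : Fin (m + 1) → ℝ) (ρ : Equiv.Perm (Fin (m + 1)))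
    (y : Fin m → Fin d → ℝ) : ENNReal :=
  ∏ i : Fin m, ENNReal.ofReal (edgeProb γ d (w (ρ i.castSucc) * w (ρ i.succ) / μb) ‖y i‖)

theorem patternProbOn_wrappedDist_le (hρ : IsHamiltonianPath H ρ) {N : ℝ} (hN : 0 < N)
    (B : Set (Fin (m + 1) → Fin (m + 1) → ℝ)) (y : Fin m → Fin d → ℝ) :
    (fundamentalBox m d N).indicator
      (fun y => patternProbOn s H γ μb d B w (wrappedDist ρ N y)) y ≤ pathEdgeProb γ μb w ρ y :=
  Set.indicator_le (fun y hy => by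
    refine (Set.indicator_le_self _ _ _).trans ((patternProb_le_prod_path hρ w _).trans_eq ?_)
    simp only [pathEdgeProb, wrappedDist_castSucc_succ hN hy]) y

variable (hd : d ≠ 0) (hγ : 1 < γ) (hμ : 0 < μb) (hw : ∀ i, 0 < w i)
include hd hμ hw

theorem lintegral_pathEdgeProb (ρ : Equiv.Perm (Fin (m + 1))) :
    ∫⁻ y : Fin m → Fin d → ℝ, pathEdgeProb γ μb w ρ y = ∏ i : Fin m,
      (edgeMass γ d * ENNReal.ofReal μb⁻¹ *
        (ENNReal.ofReal (w (ρ i.castSucc)) * ENNReal.ofReal (w (ρ i.succ)))) := by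
  simp only [pathEdgeProb]
  rw [volume_pi, lintegral_fin_prod_eq_prod volume m (fun i (y : Fin d → ℝ) => ENNReal.ofReal
    (edgeProb γ d (w (ρ i.castSucc) * w (ρ i.succ) / μb) ‖y‖)) fun i => by fun_prop]
  refine prod_congr rfl fun i _ => ?_
  have hww : 0 < w (ρ i.castSucc) * w (ρ i.succ) := mul_pos (hw _) (hw _)
  rw [lintegral_edgeProb_norm hd (div_pos hww hμ), div_eq_mul_inv, ENNReal.ofReal_mul hww.le,
    ENNReal.ofReal_mul (hw _).le]
  ring

theorem scaledMass_le_prod_path (hρ : IsHamiltonianPath H ρ) {N : ℝ} (hN : 0 < N)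
    {B : Set (Fin (m + 1) → Fin (m + 1) → ℝ)} (hB : MeasurableSet B) :
    scaledMass s H γ μb d N B w ≤ ∏ i : Fin m, (edgeMass γ d * ENNReal.ofReal μb⁻¹ *
      (ENNReal.ofReal (w (ρ i.castSucc)) * ENNReal.ofReal (w (ρ i.succ)))) := by
  rw [scaledMass_eq ρ hN hB, ← lintegral_pathEdgeProb hd hμ hw ρ]
  exact lintegral_mono (patternProbOn_wrappedDist_le hρ hN B)

include hγ in
theorem tendsto_scaledMass (hρ : IsHamiltonianPath H ρ)
    {B : Set (Fin (m + 1) → Fin (m + 1) → ℝ)} (hB : MeasurableSet B) :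
    Tendsto (fun N => scaledMass s H γ μb d N B w) atTop
      (nhds (∫⁻ y : Fin m → Fin d → ℝ, patternProbOn s H γ μb d B w (pathDist ρ y))) := by
  have hfin : ∫⁻ y : Fin m → Fin d → ℝ, pathEdgeProb γ μb w ρ y ≠ ⊤ := by
    rw [lintegral_pathEdgeProb hd hμ hw]
    exact ENNReal.prod_ne_top fun i _ => ENNReal.mul_ne_top
      (ENNReal.mul_ne_top (edgeMass_lt_top hd hγ).ne ENNReal.ofReal_ne_top)
      (ENNReal.mul_ne_top ENNReal.ofReal_ne_top ENNReal.ofReal_ne_top)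
  refine Tendsto.congr' ((eventually_gt_atTop 0).mono fun N hN => (scaledMass_eq ρ hN hB).symm) ?_
  refine tendsto_lintegral_filter_of_dominated_convergence _
    (.of_forall fun N => ((measurable_patternProbOn_right hB w).comp
      (measurable_wrappedDist ρ N)).indicator (measurableSet_fundamentalBox N))
    ((eventually_gt_atTop 0).mono fun N hN => ae_of_all _ (patternProbOn_wrappedDist_le hρ hN B))
    hfin (ae_of_all _ fun y => tendsto_const_nhds.congr' ?_)
  filter_upwards [eventually_wrappedDist_eq_pathDist (ρ := ρ) y] with N ⟨hbox, hdist⟩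
  rw [Set.indicator_of_mem hbox, hdist]

end ScaledMass

section Weights

variable {τ c : ℝ} {μW : Measure ℝ}

theorem WeightTail.ae_one_le (hW : WeightTail τ c μW) : ∀ᵐ x ∂μW, 1 ≤ x :=
  ae_iff.mpr (measure_mono_null (fun _ => not_le.mp) hW.2.1)

theorem WeightTail.eventually_measure_Ioi_le [IsFiniteMeasure μW] (hW : WeightTail τ c μW) :
    ∀ᶠ t in atTop, μW (Set.Ioi t) ≤ ENNReal.ofReal (2 * c * t ^ (1 - τ)) := by
  obtain ⟨hc, -, hlim⟩ := hW
  filter_upwards [hlim.eventually_lt_const one_lt_two, eventually_gt_atTop 0] with t hlt ht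
  rw [div_lt_iff₀ (by positivity)] at hlt
  rw [← ENNReal.ofReal_toReal (measure_ne_top μW (Set.Ioi t)), mul_assoc]
  exact ENNReal.ofReal_le_ofReal hlt.le

theorem setLIntegral_Ioc_rpow_lt_top {p : ℝ} (hp : -1 < p) (t : ℝ) :
    ∫⁻ x in Set.Ioc 0 t, ENNReal.ofReal (x ^ p) < ⊤ :=
  (intervalIntegral.intervalIntegrable_rpow' hp).1.lintegral_lt_top

theorem setLIntegral_Ioi_const_mul_rpow_lt_top {p t : ℝ} (hp : p < -1) (ht : 0 < t) (c : ℝ) :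
    ∫⁻ x in Set.Ioi t, ENNReal.ofReal (c * x ^ p) < ⊤ :=
  ((integrableOn_Ioi_rpow_of_lt hp ht).const_mul c).lintegral_lt_top

theorem WeightTail.lintegral_rpow_lt_top [IsProbabilityMeasure μW] (hW : WeightTail τ c μW) {p : ℝ}
    (hp : 0 < p) (hpτ : p < τ - 1) : ∫⁻ x, ENNReal.ofReal (x ^ p) ∂μW < ⊤ := by
  obtain ⟨t, ht⟩ := eventually_atTop.mp (hW.eventually_measure_Ioi_le.and (eventually_gt_atTop 0))
  have ht₀ : 0 < t := (ht t le_rfl).2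
  have hlow : ∀ x ∈ Set.Ioc 0 t,
      μW (Set.Ioi x) * ENNReal.ofReal (x ^ (p - 1)) ≤ ENNReal.ofReal (x ^ (p - 1)) :=
    fun x _ => mul_le_of_le_one_left' prob_le_one
  have hhigh : ∀ x ∈ Set.Ioi t,
      μW (Set.Ioi x) * ENNReal.ofReal (x ^ (p - 1)) ≤ ENNReal.ofReal (2 * c * x ^ (p - τ)) := by
    intro x hx
    have hx₀ : 0 < x := ht₀.trans hx
    have hc : 0 < c := hW.1
    calc μW (Set.Ioi x) * ENNReal.ofReal (x ^ (p - 1))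
        ≤ ENNReal.ofReal (2 * c * x ^ (1 - τ)) * ENNReal.ofReal (x ^ (p - 1)) :=
          mul_le_mul_left (ht x hx.le).1 _
      _ = ENNReal.ofReal (2 * c * x ^ (p - τ)) := by
        rw [← ENNReal.ofReal_mul (by positivity), mul_assoc, ← Real.rpow_add hx₀]
        ring_nf
  rw [lintegral_rpow_eq_lintegral_meas_lt_mul μW
    (hW.ae_one_le.mono fun x hx => zero_le_one.trans hx) aemeasurable_id' hp,
    ← Set.Ioc_union_Ioi_eq_Ioi ht₀.le]
  refine ENNReal.mul_lt_top ENNReal.ofReal_lt_top ((lintegral_union_le _ _ _).trans_lt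
    (ENNReal.add_lt_top.mpr ⟨?_, ?_⟩))
  · exact (setLIntegral_mono' measurableSet_Ioc hlow).trans_lt
      (setLIntegral_Ioc_rpow_lt_top (by linarith) t)
  · exact (setLIntegral_mono' measurableSet_Ioi hhigh).trans_lt
      (setLIntegral_Ioi_const_mul_rpow_lt_top (by linarith) ht₀ _)

theorem WeightTail.wMean_pos [IsProbabilityMeasure μW] (hW : WeightTail τ c μW) (hτ : 2 < τ) :
    0 < wMean μW := by
  have hmoment : ∫⁻ x, ENNReal.ofReal (x ^ (1 : ℝ)) ∂μW < ⊤ :=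
    hW.lintegral_rpow_lt_top one_pos (by linarith)
  simp only [Real.rpow_one] at hmoment
  have hint : Integrable (fun x : ℝ => x) μW :=
    ⟨by fun_prop, (hasFiniteIntegral_iff_ofReal
      (hW.ae_one_le.mono fun x hx => zero_le_one.trans hx)).mpr hmoment⟩
  calc (0 : ℝ) < ∫ _, 1 ∂μW := by simp
    _ ≤ wMean μW := integral_mono_ae (integrable_const 1) hint hW.ae_one_le

end Weights

/- The bound for one Hamiltonian path weights its end vertices differently from the inner ones; the
geometric mean over the rotations of the cycle restores the symmetry. -/
theorem le_prod_rpow_of_forall_rotation {m : ℕ} {Q K : ENNReal} (σ : Equiv.Perm (Fin (m + 1)))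
    (f : Fin (m + 1) → ENNReal)
    (hQ : ∀ j, Q ≤ ∏ i : Fin m, (K * (f (σ (i.castSucc + j)) * f (σ (i.succ + j))))) :
    Q ≤ K ^ m * ∏ i, f i ^ (2 * m / (m + 1) : ℝ) := by
  have hroot (a : ENNReal) : (a ^ (2 * m / (m + 1) : ℝ)) ^ (m + 1) = a ^ (2 * m) := by
    rw [← ENNReal.rpow_natCast, ← ENNReal.rpow_natCast, ← ENNReal.rpow_mul]
    push_cast
    rw [div_mul_cancel₀ _ (by positivity)]
  rw [← ENNReal.pow_le_pow_left_iff m.succ_ne_zero]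
  calc Q ^ (m + 1) = ∏ _j : Fin (m + 1), Q := by simp
    _ ≤ ∏ j, ∏ i : Fin m, (K * (f (σ (i.castSucc + j)) * f (σ (i.succ + j)))) :=
      prod_le_prod' fun j _ => hQ j
    _ = (K ^ m) ^ (m + 1) * (∏ i, f i) ^ (2 * m) := by
      simp only [prod_mul_distrib, ← prod_prod_rotate σ f, prod_const, card_univ,
        Fintype.card_fin]
    _ = (K ^ m * ∏ i, f i ^ (2 * m / (m + 1) : ℝ)) ^ (m + 1) := by
      simp only [mul_pow, ← prod_pow, hroot]

section PatternEvent

variable {k d : ℕ} {γ μb : ℝ} {s : StarKind} {H : SimpleGraph (Fin k)}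

/-- The event that a tuple of `k` vertices realises `H` and has an `N`-scaled distance matrix in
`B`. -/
def patternEvent (s : StarKind) (H : SimpleGraph (Fin k)) (γ μb : ℝ) (d : ℕ) (N : ℝ)
    (B : Set (Fin k → Fin k → ℝ)) : Set (GirgΩ d k) :=
  {ω | scaledDist N ω.2.1 ∈ B ∧ IsPatternOf s H γ μb d ω.1 (scaledDist N ω.2.1) ω.2.2}

theorem measurableSet_patternEvent (N : ℝ) {B : Set (Fin k → Fin k → ℝ)} (hB : MeasurableSet B) :
    MeasurableSet (patternEvent s H γ μb d N B) := by
  have hdist : Measurable fun ω : GirgΩ d k => scaledDist N ω.2.1 :=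
    (measurable_scaledDist N).comp measurable_snd.fst
  exact (hdist hB).inter
    (((measurable_fst.prodMk hdist).prodMk measurable_snd.snd) measurableSet_isPatternOf)

theorem girgMeasure_patternEvent (μW : Measure ℝ) [IsProbabilityMeasure μW] (N : ℝ)
    {B : Set (Fin k → Fin k → ℝ)} (hB : MeasurableSet B) :
    girgMeasure μW d k (patternEvent s H γ μb d N B) =
      ∫⁻ w, ∫⁻ x : Fin k → Torus d, patternProbOn s H γ μb d B w (scaledDist N x)
        ∂(Measure.pi fun _ => volume) ∂(Measure.pi fun _ => μW) := by
  have hE : MeasurableSet (patternEvent s H γ μb d N B) := measurableSet_patternEvent N hB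
  rw [girgMeasure, Measure.prod_apply hE]
  refine lintegral_congr fun w => ?_
  rw [Measure.prod_apply (measurable_prodMk_left hE)]
  refine lintegral_congr fun x => ?_
  by_cases hx : scaledDist N x ∈ B
  · simp [patternProbOn, patternProb, patternEvent, hx]
  · simp [patternProbOn, patternEvent, hx]

end PatternEvent

section LimitMeasure

variable {m d : ℕ} {γ μb : ℝ} {s : StarKind} {H : SimpleGraph (Fin (m + 1))} {μW : Measure ℝ}
  {σ : Equiv.Perm (Fin (m + 1))}

/-- The limit intensity of the scaled distance matrices of the tuples that realise `H`: the
increments along the path `ρ` range over Lebesgue measure and the weights are i.i.d. -/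
def limitMeasure (s : StarKind) (H : SimpleGraph (Fin (m + 1))) (γ μb : ℝ) (d : ℕ)
    (μW : Measure ℝ) (ρ : Equiv.Perm (Fin (m + 1))) :
    Measure (Fin (m + 1) → Fin (m + 1) → ℝ) :=
  (((Measure.pi fun _ => μW).prod volume).withDensity
    fun p : (Fin (m + 1) → ℝ) × (Fin m → Fin d → ℝ) =>
      patternProb s H γ μb d p.1 (pathDist ρ p.2)).map fun p => pathDist ρ p.2

theorem limitMeasure_apply [IsProbabilityMeasure μW] (ρ : Equiv.Perm (Fin (m + 1)))
    {B : Set (Fin (m + 1) → Fin (m + 1) → ℝ)} (hB : MeasurableSet B) :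
    limitMeasure s H γ μb d μW ρ B = ∫⁻ w, (∫⁻ y : Fin m → Fin d → ℝ,
      patternProbOn s H γ μb d B w (pathDist ρ y)) ∂(Measure.pi fun _ => μW) := by
  have hdist : Measurable fun p : (Fin (m + 1) → ℝ) × (Fin m → Fin d → ℝ) => pathDist ρ p.2 :=
    (continuous_pathDist ρ).measurable.comp measurable_snd
  rw [limitMeasure, Measure.map_apply hdist hB, withDensity_apply _ (hdist hB),
    ← lintegral_indicator (hdist hB), lintegral_prod]
  · rfl
  · exact ((measurable_patternProb.comp (measurable_fst.prodMk hdist)).indicator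
      (hdist hB)).aemeasurable

theorem exists_forall_lt_pathDist (ρ : Equiv.Perm (Fin (m + 1))) (hd : d ≠ 0) (r : ℝ) :
    ∃ y : Fin m → Fin d → ℝ, ∀ i j, i ≠ j → r < pathDist ρ y i j := by
  have : NeZero d := ⟨hd⟩
  let y : Fin m → Fin d → ℝ := fun _ _ => |r| + 1
  have hsum (j : Fin (m + 1)) : Fin.partialSum y j = fun _ => (j : ℝ) * (|r| + 1) := by
    induction j using Fin.induction with
    | zero => ext; simp
    | succ j ih =>
      ext
      simp only [Fin.partialSum_succ, ih, Pi.add_apply, y, Fin.val_castSucc, Fin.val_succ]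
      push_cast
      ring
  refine ⟨y, fun i j hij => ?_⟩
  have hne : ((ρ.symm i : ℕ) : ℤ) - (ρ.symm j : ℕ) ≠ 0 := by
    simpa [sub_eq_zero, Fin.val_inj] using hij
  have hone : (1 : ℝ) ≤ |(ρ.symm i : ℝ) - (ρ.symm j : ℝ)| := by
    exact_mod_cast Int.one_le_abs hne
  have hdist : pathDist ρ y i j = |(ρ.symm i : ℝ) - (ρ.symm j : ℝ)| * (|r| + 1) := by
    have hsub : pathPosition ρ y i - pathPosition ρ y j =
        fun _ => ((ρ.symm i : ℝ) - (ρ.symm j : ℝ)) * (|r| + 1) := by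
      ext
      simp only [pathPosition, hsum, Pi.sub_apply, sub_mul]
    rw [pathDist, hsub, pi_norm_const, norm_mul, Real.norm_eq_abs,
      Real.norm_of_nonneg (by positivity)]
  rw [hdist]
  nlinarith [le_abs_self r, abs_nonneg r]

theorem ae_forall_pos (hpos : ∀ᵐ x ∂μW, 0 < x) [IsProbabilityMeasure μW] :
    ∀ᵐ w ∂(Measure.pi fun _ : Fin (m + 1) => μW), ∀ i, 0 < w i :=
  ae_all_iff.mpr fun i => (Measure.quasiMeasurePreserving_eval (fun _ => μW) i).ae hpos

theorem lintegral_patternProb_pathDist_pos (ρ : Equiv.Perm (Fin (m + 1))) (hd : d ≠ 0)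
    (hγ : 0 < γ) (hμ : 0 < μb) {w : Fin (m + 1) → ℝ} (hw : ∀ i, 0 < w i) :
    0 < ∫⁻ y : Fin m → Fin d → ℝ, patternProb s H γ μb d w (pathDist ρ y) := by
  obtain ⟨M, hM⟩ := (Set.finite_range fun p : Fin (m + 1) × Fin (m + 1) =>
    w p.1 * w p.2 / μb).bddAbove
  let U : Set (Fin m → Fin d → ℝ) := {y | ∀ i j, i ≠ j → max 1 M < pathDist ρ y i j}
  have hU : IsOpen U := by
    have hdist (i j) : Continuous fun y : Fin m → Fin d → ℝ => pathDist ρ y i j :=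
      (continuous_apply_apply i j).comp (continuous_pathDist ρ)
    simp only [U, Set.ofPred_forall]
    exact isOpen_iInter_of_finite fun i => isOpen_iInter_of_finite fun j =>
      isOpen_iInter_of_finite fun _ => isOpen_lt continuous_const (hdist i j)
  have hUpos : ∀ y ∈ U, 0 < patternProb s H γ μb d w (pathDist ρ y) := by
    intro y hy
    have hone {i j} (hij : i ≠ j) : 1 < pathDist ρ y i j := (le_max_left 1 M).trans_lt (hy i j hij)
    refine patternProb_pos hγ hμ hw (fun i j => norm_sub_rev _ _)
      (fun i j hij => one_pos.trans (hone hij)) fun i j hij => ?_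
    calc w i * w j / μb ≤ M := hM ⟨(i, j), rfl⟩
      _ < pathDist ρ y i j := (le_max_right 1 M).trans_lt (hy i j hij)
      _ ≤ pathDist ρ y i j ^ d := le_self_pow₀ (hone hij).le hd
  have hmeas : Measurable fun y : Fin m → Fin d → ℝ => patternProb s H γ μb d w (pathDist ρ y) :=
    (measurable_patternProb_right w).comp (continuous_pathDist ρ).measurable
  rw [lintegral_pos_iff_support hmeas]
  exact (hU.measure_pos volume (exists_forall_lt_pathDist ρ hd _)).trans_le
    (measure_mono fun y hy => (hUpos y hy).ne')

theorem limitMeasure_univ_pos [IsProbabilityMeasure μW] (hpos : ∀ᵐ x ∂μW, 0 < x)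
    (ρ : Equiv.Perm (Fin (m + 1))) (hd : d ≠ 0) (hγ : 0 < γ) (hμ : 0 < μb) :
    0 < limitMeasure s H γ μb d μW ρ Set.univ := by
  have hmeas : Measurable fun w : Fin (m + 1) → ℝ =>
      ∫⁻ y : Fin m → Fin d → ℝ, patternProb s H γ μb d w (pathDist ρ y) :=
    Measurable.lintegral_prod_right' (measurable_patternProb.comp
      (measurable_fst.prodMk ((continuous_pathDist ρ).measurable.comp measurable_snd)))
  rw [limitMeasure_apply ρ .univ]
  simp only [patternProbOn, Set.indicator_univ]
  refine pos_iff_ne_zero.mpr fun hzero => ?_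
  obtain ⟨w, hw₀, hw⟩ := (((lintegral_eq_zero_iff hmeas).mp hzero).and (ae_forall_pos hpos)).exists
  exact (lintegral_patternProb_pathDist_pos ρ hd hγ hμ hw).ne' hw₀

theorem ofReal_pow_mul_girgMeasure_patternEvent [IsProbabilityMeasure μW] (N : ℝ)
    {B : Set (Fin (m + 1) → Fin (m + 1) → ℝ)} (hB : MeasurableSet B) :
    ENNReal.ofReal (N ^ (m * d)) * girgMeasure μW d (m + 1) (patternEvent s H γ μb d N B) =
      ∫⁻ w, scaledMass s H γ μb d N B w ∂(Measure.pi fun _ => μW) := by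
  rw [girgMeasure_patternEvent μW N hB, ← lintegral_const_mul' _ _ ENNReal.ofReal_ne_top]
  rfl

theorem lintegral_edgeMass_pow_mul_prod_rpow_lt_top [IsProbabilityMeasure μW] (hd : d ≠ 0)
    (hγ : 1 < γ) (μb : ℝ) (hmoment : ∫⁻ x, ENNReal.ofReal x ^ (2 * m / (m + 1) : ℝ) ∂μW < ⊤) :
    ∫⁻ w, (edgeMass γ d * ENNReal.ofReal μb⁻¹) ^ m *
      ∏ i, ENNReal.ofReal (w i) ^ (2 * m / (m + 1) : ℝ)
      ∂(Measure.pi fun _ : Fin (m + 1) => μW) < ⊤ := by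
  rw [lintegral_const_mul _ (by fun_prop), lintegral_fin_prod_eq_prod μW (m + 1)
    (fun _ x => ENNReal.ofReal x ^ (2 * m / (m + 1) : ℝ)) fun _ => by fun_prop]
  exact ENNReal.mul_lt_top (ENNReal.pow_lt_top (ENNReal.mul_lt_top (edgeMass_lt_top hd hγ)
    ENNReal.ofReal_lt_top)) (ENNReal.prod_lt_top fun _ _ => hmoment)

variable (hσ : ∀ i, H.Adj (σ i) (σ (i + 1))) (hd : d ≠ 0) (hγ : 1 < γ) (hμ : 0 < μb)
include hσ hd hμ

theorem scaledMass_le_prod_rpow {w : Fin (m + 1) → ℝ} (hw : ∀ i, 0 < w i) {N : ℝ} (hN : 0 < N)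
    {B : Set (Fin (m + 1) → Fin (m + 1) → ℝ)} (hB : MeasurableSet B) :
    scaledMass s H γ μb d N B w ≤ (edgeMass γ d * ENNReal.ofReal μb⁻¹) ^ m *
      ∏ i, ENNReal.ofReal (w i) ^ (2 * m / (m + 1) : ℝ) :=
  le_prod_rpow_of_forall_rotation σ (fun i => ENNReal.ofReal (w i)) fun j =>
    scaledMass_le_prod_path hd hμ hw (isHamiltonianPath_rotate hσ j) hN hB

include hγ

theorem tendsto_girgMeasure_patternEvent [IsProbabilityMeasure μW] (hpos : ∀ᵐ x ∂μW, 0 < x)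
    (hmoment : ∫⁻ x, ENNReal.ofReal x ^ (2 * m / (m + 1) : ℝ) ∂μW < ⊤)
    {B : Set (Fin (m + 1) → Fin (m + 1) → ℝ)} (hB : MeasurableSet B) :
    Tendsto (fun N => ENNReal.ofReal (N ^ (m * d)) *
      girgMeasure μW d (m + 1) (patternEvent s H γ μb d N B)) atTop
      (nhds (limitMeasure s H γ μb d μW σ B)) := by
  have hρ : IsHamiltonianPath H σ := fun i => by
    simpa only [Fin.coeSucc_eq_succ] using hσ i.castSucc
  simp only [ofReal_pow_mul_girgMeasure_patternEvent _ hB, limitMeasure_apply σ hB]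
  exact tendsto_lintegral_filter_of_dominated_convergence _
    (.of_forall fun N => measurable_scaledMass N hB)
    ((eventually_gt_atTop 0).mono fun N hN => (ae_forall_pos hpos).mono fun w hw =>
      scaledMass_le_prod_rpow hσ hd hμ hw hN hB)
    (lintegral_edgeMass_pow_mul_prod_rpow_lt_top hd hγ μb hmoment).ne
    ((ae_forall_pos hpos).mono fun w hw => tendsto_scaledMass hd hγ hμ hw hρ hB)

theorem isFiniteMeasure_limitMeasure [IsProbabilityMeasure μW] (hpos : ∀ᵐ x ∂μW, 0 < x)
    (hmoment : ∫⁻ x, ENNReal.ofReal x ^ (2 * m / (m + 1) : ℝ) ∂μW < ⊤) :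
    IsFiniteMeasure (limitMeasure s H γ μb d μW σ) := by
  refine ⟨lt_of_le_of_lt (le_of_tendsto
    (tendsto_girgMeasure_patternEvent hσ hd hγ hμ hpos hmoment .univ) ?_)
    (lintegral_edgeMass_pow_mul_prod_rpow_lt_top hd hγ μb hmoment)⟩
  filter_upwards [eventually_gt_atTop 0] with N hN
  rw [ofReal_pow_mul_girgMeasure_patternEvent N .univ]
  exact lintegral_mono_ae ((ae_forall_pos hpos).mono fun w hw =>
    scaledMass_le_prod_rpow hσ hd hμ hw hN .univ)

end LimitMeasure

/-! ### Concentration of the number of close patterns -/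

section Occupancy

theorem exists_forall_pow_le_mul_two_pow (p : ℕ) : ∃ C : ℕ, ∀ n : ℕ, n ^ p ≤ C * 2 ^ n := by
  obtain ⟨C, hC⟩ := (tendsto_pow_const_div_const_pow_of_one_lt p one_lt_two).bddAbove_range
  refine ⟨⌈C⌉₊, fun n => ?_⟩
  have hn : (n : ℝ) ^ p ≤ C * 2 ^ n := (div_le_iff₀ (by positivity)).mp (hC ⟨n, rfl⟩)
  exact_mod_cast hn.trans (mul_le_mul_of_nonneg_right (Nat.le_ceil C) (by positivity))

open scoped Classical in
/-- The number of the points `x` at distance at most `r` from the point `x z`, which is counted. -/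
def ballCount {ι X : Type*} [Fintype ι] [PseudoMetricSpace X] (r : ℝ) (x : ι → X) (z : ι) : ℕ :=
  #{y | dist (x y) (x z) ≤ r}

theorem two_pow_ballCount {ι X : Type*} [Fintype ι] [PseudoMetricSpace X] (r : ℝ) (x : ι → X)
    (z : ι) : (2 : ENNReal) ^ ballCount r x z =
      ∏ y, (1 + (Metric.closedBall (x z) r).indicator 1 (x y)) := by
  classical
  rw [ballCount, ← prod_const, prod_filter]
  refine Finset.prod_congr rfl fun y _ => ?_
  by_cases hy : dist (x y) (x z) ≤ r
  · simp [hy, one_add_one_eq_two]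
  · simp [hy]

theorem lintegral_prod_one_add_indicator {X : Type*} [MeasurableSpace X] (μ : Measure X)
    [IsProbabilityMeasure μ] {A : Set X} (hA : MeasurableSet A) (n : ℕ) :
    ∫⁻ x, ∏ i : Fin n, (1 + A.indicator 1 (x i)) ∂(Measure.pi fun _ => μ) = (1 + μ A) ^ n := by
  rw [lintegral_fin_prod_eq_prod μ n (fun _ t => 1 + A.indicator 1 t)
    fun _ => (measurable_one.indicator hA).const_add 1, lintegral_add_left measurable_const,
    lintegral_const, measure_univ, one_mul, lintegral_indicator_one hA, prod_const, card_univ,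
    Fintype.card_fin]

theorem measurable_ballCount {d n : ℕ} (r : ℝ) (z : Fin n) :
    Measurable fun x : Fin n → Torus d => ballCount r x z := by
  classical
  simp only [ballCount, card_filter]
  exact Finset.measurable_sum _ fun y _ =>
    Measurable.ite (measurableSet_le (by fun_prop) measurable_const) measurable_const
      measurable_const

theorem volume_torus_closedBall_le {d : ℕ} (a : Torus d) {r : ℝ} (hr : 0 ≤ r) :
    volume (Metric.closedBall a r) ≤ ENNReal.ofReal ((2 * r) ^ d) := by
  rw [volume_pi, Measure.pi_closedBall _ _ hr]
  calc ∏ i : Fin d, volume (Metric.closedBall (a i) r)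
      ≤ ∏ _i : Fin d, ENNReal.ofReal (2 * r) := prod_le_prod' fun i _ => by
        rw [AddCircle.volume_closedBall]
        exact ENNReal.ofReal_le_ofReal (min_le_right _ _)
    _ = ENNReal.ofReal ((2 * r) ^ d) := by
      simp [ENNReal.ofReal_pow (mul_nonneg zero_le_two hr)]

theorem lintegral_two_pow_ballCount_le {d n : ℕ} {r : ℝ} (hr : 0 ≤ r) (z : Fin n) :
    ∫⁻ x : Fin n → Torus d, 2 ^ ballCount r x z ∂(Measure.pi fun _ => volume) ≤
      2 * (1 + ENNReal.ofReal ((2 * r) ^ d)) ^ n := by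
  obtain _ | n := n
  · exact z.elim0
  have hdist : MeasurableSet {p : Torus d × Torus d | dist p.2 p.1 ≤ r} :=
    measurableSet_le (by fun_prop) measurable_const
  have hball : Measurable fun p : Torus d × Torus d =>
      1 + (Metric.closedBall p.1 r).indicator (1 : Torus d → ENNReal) p.2 :=
    (measurable_one.indicator hdist).const_add 1
  have hprod : Measurable fun p : Torus d × (Fin n → Torus d) =>
      2 * ∏ y, (1 + (Metric.closedBall p.1 r).indicator (1 : Torus d → ENNReal) (p.2 y)) :=
    (Finset.measurable_prod _ fun y _ => hball.comp
      (measurable_fst.prodMk ((measurable_pi_apply y).comp measurable_snd))).const_mul 2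
  have hsplit := measurePreserving_piFinSuccAbove
    (fun _ : Fin (n + 1) => (volume : Measure (Torus d))) z
  calc ∫⁻ x : Fin (n + 1) → Torus d, 2 ^ ballCount r x z ∂(Measure.pi fun _ => volume)
      = ∫⁻ p : Torus d × (Fin n → Torus d),
          2 * ∏ y, (1 + (Metric.closedBall p.1 r).indicator 1 (p.2 y))
          ∂(volume.prod (Measure.pi fun _ => volume)) := by
        rw [← hsplit.lintegral_comp_emb (MeasurableEquiv.measurableEmbedding _)]
        refine lintegral_congr fun x => ?_
        rw [two_pow_ballCount, Fin.prod_univ_succAbove _ z]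
        simp [hr, one_add_one_eq_two]
        rfl
    _ = ∫⁻ a : Torus d, 2 * (1 + volume (Metric.closedBall a r)) ^ n := by
        rw [lintegral_prod _ hprod.aemeasurable]
        refine lintegral_congr fun a => ?_
        rw [lintegral_const_mul' _ _ (by simp), lintegral_prod_one_add_indicator volume
          Metric.isClosed_closedBall.measurableSet]
    _ ≤ ∫⁻ _a : Torus d, 2 * (1 + ENNReal.ofReal ((2 * r) ^ d)) ^ n :=
        lintegral_mono fun a => by gcongr; exact volume_torus_closedBall_le a hr
    _ ≤ 2 * (1 + ENNReal.ofReal ((2 * r) ^ d)) ^ (n + 1) := by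
        rw [lintegral_const, measure_univ, mul_one]
        gcongr
        · exact le_self_add
        · exact n.le_succ

theorem card_overlapping_close_le {κ ι X : Type*} [Fintype κ] [Fintype ι] [PseudoMetricSpace X]
    (r : ℝ) (x : ι → X) {D : Finset ((κ ↪ ι) × (κ ↪ ι))}
    (hoverlap : ∀ p ∈ D, ∃ i j, p.1 i = p.2 j)
    (hclose : ∀ p ∈ D, (∀ i j, dist (x (p.1 i)) (x (p.1 j)) ≤ r) ∧
      ∀ i j, dist (x (p.2 i)) (x (p.2 j)) ≤ r) :
    #D ≤ ∑ z, ballCount r x z ^ (2 * Fintype.card κ) := by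
  classical
  let ball : ι → Finset ι := fun z => {y | dist (x y) (x z) ≤ r}
  let tuples : ι → Finset ((κ → ι) × (κ → ι)) := fun z =>
    (Fintype.piFinset fun _ => ball z) ×ˢ (Fintype.piFinset fun _ => ball z)
  have hmem : ∀ p ∈ D, Prod.map (⇑) (⇑) p ∈ univ.biUnion tuples := fun p hp => by
    obtain ⟨i, j, hij⟩ := hoverlap p hp
    refine mem_biUnion.mpr ⟨p.1 i, mem_univ _, ?_⟩
    simp only [tuples, ball, mem_product, Fintype.mem_piFinset, mem_filter, mem_univ, true_and,
      Prod.map_fst, Prod.map_snd]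
    exact ⟨fun a => (hclose p hp).1 a i, fun a => hij ▸ (hclose p hp).2 a j⟩
  have hinj : Function.Injective (Prod.map (⇑) (⇑) : (κ ↪ ι) × (κ ↪ ι) → (κ → ι) × (κ → ι)) :=
    DFunLike.coe_injective.prodMap DFunLike.coe_injective
  calc #D ≤ #(univ.biUnion tuples) := card_le_card_of_injOn _ hmem hinj.injOn
    _ ≤ ∑ z, #(tuples z) := card_biUnion_le
    _ = ∑ z, ballCount r x z ^ (2 * Fintype.card κ) := by
        refine sum_congr rfl fun z _ => ?_
        rw [card_product, Fintype.card_piFinset, prod_const, card_univ, ← pow_add, ← two_mul]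
        rfl

end Occupancy

section EventCount

variable {Ω ι : Type*} [MeasurableSpace Ω] {μ : Measure Ω} {A : ι → Set Ω}

theorem lintegral_card_filter_mem [∀ ω, DecidablePred (ω ∈ A ·)] (s : Finset ι)
    (hA : ∀ i, MeasurableSet (A i)) :
    ∫⁻ ω, (#{i ∈ s | ω ∈ A i} : ENNReal) ∂μ = ∑ i ∈ s, μ (A i) := by
  calc ∫⁻ ω, (#{i ∈ s | ω ∈ A i} : ENNReal) ∂μ
      = ∫⁻ ω, ∑ i ∈ s, (A i).indicator 1 ω ∂μ :=
        lintegral_congr fun ω => by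
          simp only [Finset.natCast_card_filter, Set.indicator_apply, Pi.one_apply]
    _ = ∑ i ∈ s, μ (A i) := by
        rw [lintegral_finsetSum _ fun i _ => measurable_one.indicator (hA i)]
        exact sum_congr rfl fun i _ => lintegral_indicator_one (hA i)

theorem memLp_indicator_one [IsFiniteMeasure μ] {A : Set Ω} (hA : MeasurableSet A) (p : ENNReal) :
    MemLp (A.indicator (1 : Ω → ℝ)) p μ :=
  memLp_indicator_const p hA 1 (Or.inr (measure_ne_top _ _))

variable [IsProbabilityMeasure μ]

theorem covariance_indicator_one {A B : Set Ω} (hA : MeasurableSet A) (hB : MeasurableSet B) :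
    ProbabilityTheory.covariance (A.indicator 1) (B.indicator (1 : Ω → ℝ)) μ =
      μ.real (A ∩ B) - μ.real A * μ.real B := by
  rw [ProbabilityTheory.covariance_eq_sub (memLp_indicator_one hA 2)
    (memLp_indicator_one hB 2), ← Set.inter_indicator_one, integral_indicator_one (hA.inter hB),
    integral_indicator_one hA, integral_indicator_one hB]

theorem variance_card_filter_mem_le [Fintype ι] [∀ ω, DecidablePred (ω ∈ A ·)]
    (hA : ∀ i, MeasurableSet (A i)) {D : Finset (ι × ι)}
    (hD : ∀ p ∉ D, μ (A p.1 ∩ A p.2) = μ (A p.1) * μ (A p.2)) :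
    ProbabilityTheory.variance (fun ω => (#{i | ω ∈ A i} : ℝ)) μ ≤
      ∑ p ∈ D, μ.real (A p.1 ∩ A p.2) := by
  have hcount : (fun ω => (#{i | ω ∈ A i} : ℝ)) = fun ω => ∑ i, (A i).indicator 1 ω := by
    ext ω
    simp only [Finset.natCast_card_filter, Set.indicator_apply, Pi.one_apply]
  have hcov : ∀ p ∉ D, ProbabilityTheory.covariance ((A p.1).indicator 1)
      ((A p.2).indicator (1 : Ω → ℝ)) μ = 0 := fun p hp => by
    rw [covariance_indicator_one (hA _) (hA _), measureReal_def, hD p hp, ENNReal.toReal_mul]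
    exact sub_self _
  rw [hcount, ProbabilityTheory.variance_fun_sum fun i => memLp_indicator_one (hA i) 2,
    ← Fintype.sum_prod_type', ← sum_subset (subset_univ D) fun p _ hp => hcov p hp]
  refine sum_le_sum fun p _ => ?_
  rw [covariance_indicator_one (hA _) (hA _)]
  exact sub_le_self _ (by positivity)

end EventCount

section TupleCount

variable {d k n : ℕ} {μW : Measure ℝ} [IsProbabilityMeasure μW]

instance isProbabilityMeasure_girgMeasure : IsProbabilityMeasure (girgMeasure μW d n) := by
  unfold girgMeasure
  infer_instance

/-- The randomness attached to a tuple `v` of vertices and to the pairs of its members. -/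
def restrictTuple (v : Fin k → Fin n) (ω : GirgΩ d n) : GirgΩ d k :=
  (fun i => ω.1 (v i), fun i => ω.2.1 (v i), fun e => ω.2.2 (Sym2.map v e))

theorem measurePreserving_restrictTuple {v : Fin k → Fin n} (hv : Function.Injective v) :
    MeasurePreserving (restrictTuple v) (girgMeasure μW d n) (girgMeasure μW d k) :=
  (measurePreserving_pi_comp_injective μW hv).prod
    ((measurePreserving_pi_comp_injective volume hv).prod
      (measurePreserving_pi_comp_injective _ (Sym2.map.injective hv)))

theorem sym2_map_ne_map {α β γ : Type*} {u : α → γ} {v : β → γ} (huv : ∀ i j, u i ≠ v j)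
    (a : Sym2 α) (b : Sym2 β) : Sym2.map u a ≠ Sym2.map v b := by
  induction a with | _ a a'
  induction b with | _ b b'
  simp [huv]

theorem measurePreserving_restrictTuple_pair {u v : Fin k → Fin n} (hu : Function.Injective u)
    (hv : Function.Injective v) (huv : ∀ i j, u i ≠ v j) :
    MeasurePreserving (fun ω => (restrictTuple u ω, restrictTuple v ω)) (girgMeasure μW d n)
      ((girgMeasure μW d k).prod (girgMeasure μW d k)) := by
  have hcoin := measurePreserving_pi_comp_pair (volume.restrict (Set.Icc (0 : ℝ) 1))
    (Sym2.map.injective hu) (Sym2.map.injective hv) (sym2_map_ne_map huv)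
  have htail := (measurePreserving_prod_prod_prod_comm _ _ _ _).comp
    ((measurePreserving_pi_comp_pair (volume : Measure (Torus d)) hu hv huv).prod hcoin)
  exact (measurePreserving_prod_prod_prod_comm _ _ _ _).comp
    ((measurePreserving_pi_comp_pair μW hu hv huv).prod htail)

open scoped Classical in
/-- The number of ordered tuples of distinct vertices whose randomness lies in `S`. -/
def tupleCount (S : Set (GirgΩ d k)) (ω : GirgΩ d n) : ℕ :=
  #{v : Fin k ↪ Fin n | restrictTuple v ω ∈ S}

variable {S : Set (GirgΩ d k)}

theorem measurableSet_restrictTuple_preimage (hS : MeasurableSet S) (v : Fin k ↪ Fin n) :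
    MeasurableSet (restrictTuple v ⁻¹' S) := by
  refine Measurable.prodMk ?_ (Measurable.prodMk ?_ ?_) hS <;> fun_prop

theorem measurable_tupleCount (hS : MeasurableSet S) :
    Measurable (tupleCount (n := n) S) := by
  classical
  unfold tupleCount
  simp only [card_filter]
  exact Finset.measurable_sum _ fun v _ =>
    Measurable.ite (measurableSet_restrictTuple_preimage hS v) measurable_const measurable_const

theorem tupleCount_union {T : Set (GirgΩ d k)} (hST : Disjoint S T) (ω : GirgΩ d n) :
    tupleCount (S ∪ T) ω = tupleCount S ω + tupleCount T ω := by
  classical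
  unfold tupleCount
  rw [← card_union_of_disjoint (disjoint_filter.mpr fun v _ hS hT =>
    Set.disjoint_left.mp hST hS hT), ← filter_or]
  simp only [Set.mem_union]

theorem lintegral_tupleCount (hS : MeasurableSet S) :
    ∫⁻ ω, (tupleCount S ω : ENNReal) ∂(girgMeasure μW d n) =
      n.descFactorial k * girgMeasure μW d k S := by
  classical
  calc ∫⁻ ω, (tupleCount S ω : ENNReal) ∂(girgMeasure μW d n)
      = ∑ v : Fin k ↪ Fin n, girgMeasure μW d n (restrictTuple v ⁻¹' S) :=
        lintegral_card_filter_mem univ (measurableSet_restrictTuple_preimage hS)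
    _ = n.descFactorial k * girgMeasure μW d k S := by
        simp [(measurePreserving_restrictTuple (Function.Embedding.injective _)).measure_preimage
          hS.nullMeasurableSet, Fintype.card_embedding_eq]

theorem girgMeasure_inter_of_disjoint (hS : MeasurableSet S) {u v : Fin k ↪ Fin n}
    (huv : ∀ i j, u i ≠ v j) :
    girgMeasure μW d n (restrictTuple u ⁻¹' S ∩ restrictTuple v ⁻¹' S) =
      girgMeasure μW d n (restrictTuple u ⁻¹' S) * girgMeasure μW d n (restrictTuple v ⁻¹' S) := by
  rw [(measurePreserving_restrictTuple u.injective).measure_preimage hS.nullMeasurableSet,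
    (measurePreserving_restrictTuple v.injective).measure_preimage hS.nullMeasurableSet,
    ← Measure.prod_prod]
  exact (measurePreserving_restrictTuple_pair u.injective v.injective huv).measure_preimage
    (hS.prod hS).nullMeasurableSet

variable {r : ℝ} {D : Finset ((Fin k ↪ Fin n) × (Fin k ↪ Fin n))}

open scoped Classical in
theorem card_overlapping_mem_le (hoverlap : ∀ p ∈ D, ∃ i j, p.1 i = p.2 j)
    (hclose : ∀ ω ∈ S, ∀ i j, dist (ω.2.1 i) (ω.2.1 j) ≤ r) (ω : GirgΩ d n) :
    #{p ∈ D | ω ∈ restrictTuple p.1 ⁻¹' S ∩ restrictTuple p.2 ⁻¹' S} ≤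
      ∑ z, ballCount r ω.2.1 z ^ (2 * k) := by
  have hcard := card_overlapping_close_le r ω.2.1
    (D := {p ∈ D | ω ∈ restrictTuple p.1 ⁻¹' S ∩ restrictTuple p.2 ⁻¹' S})
    (fun p hp => hoverlap p (mem_of_mem_filter p hp))
    fun p hp => (mem_filter.mp hp).2.imp (hclose (restrictTuple p.1 ω))
      (hclose (restrictTuple p.2 ω))
  rwa [Fintype.card_fin] at hcard

theorem sum_girgMeasure_overlapping_le (hS : MeasurableSet S)
    (hoverlap : ∀ p ∈ D, ∃ i j, p.1 i = p.2 j) (hr : 0 ≤ r)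
    (hclose : ∀ ω ∈ S, ∀ i j, dist (ω.2.1 i) (ω.2.1 j) ≤ r) {C : ℕ}
    (hC : ∀ m : ℕ, m ^ (2 * k) ≤ C * 2 ^ m) :
    ∑ p ∈ D, girgMeasure μW d n (restrictTuple p.1 ⁻¹' S ∩ restrictTuple p.2 ⁻¹' S) ≤
      n * (C * (2 * (1 + ENNReal.ofReal ((2 * r) ^ d)) ^ n)) := by
  classical
  have hpow : ∀ z, Measurable fun x : Fin n → Torus d => (2 : ENNReal) ^ ballCount r x z := fun z =>
    (measurable_of_countable fun m : ℕ => (2 : ENNReal) ^ m).comp (measurable_ballCount r z)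
  have hpos : MeasurePreserving (fun ω : GirgΩ d n => ω.2.1) (girgMeasure μW d n)
      (Measure.pi fun _ => volume) := measurePreserving_fst.comp measurePreserving_snd
  rw [← lintegral_card_filter_mem D fun p => (measurableSet_restrictTuple_preimage hS p.1).inter
    (measurableSet_restrictTuple_preimage hS p.2)]
  calc ∫⁻ ω, (#{p ∈ D | ω ∈ restrictTuple p.1 ⁻¹' S ∩ restrictTuple p.2 ⁻¹' S} : ENNReal)
        ∂(girgMeasure μW d n)
      ≤ ∫⁻ ω, ∑ z, C * 2 ^ ballCount r ω.2.1 z ∂(girgMeasure μW d n) :=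
        lintegral_mono fun ω => by
          have hcount := (card_overlapping_mem_le hoverlap hclose ω).trans
            (sum_le_sum fun z _ => hC _)
          simpa using (Nat.cast_le (α := ENNReal)).mpr hcount
    _ = ∑ z, C * ∫⁻ x : Fin n → Torus d, 2 ^ ballCount r x z ∂(Measure.pi fun _ => volume) := by
        rw [hpos.lintegral_comp (f := fun x => ∑ z, C * 2 ^ ballCount r x z)
          (Finset.measurable_sum _ fun z _ => (hpow z).const_mul _),
          lintegral_finsetSum _ fun z _ => (hpow z).const_mul _]
        exact sum_congr rfl fun z _ => lintegral_const_mul _ (hpow z)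
    _ ≤ ∑ _z : Fin n, C * (2 * (1 + ENNReal.ofReal ((2 * r) ^ d)) ^ n) := by
        gcongr with z
        exact lintegral_two_pow_ballCount_le hr z
    _ = n * (C * (2 * (1 + ENNReal.ofReal ((2 * r) ^ d)) ^ n)) := by simp

theorem one_add_div_rpow_pow_le_exp (hd : d ≠ 0) (a : ℝ) (ha : 0 ≤ a) :
    (1 + (a / (n : ℝ) ^ (1 / (d : ℝ))) ^ d) ^ n ≤ Real.exp (a ^ d) := by
  obtain rfl | hn := eq_or_ne n 0
  · simpa using Real.one_le_exp (pow_nonneg ha d)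
  rw [div_pow, one_div, Real.rpow_inv_natCast_pow n.cast_nonneg hd, add_comm]
  calc (a ^ d / n + 1) ^ n ≤ Real.exp (a ^ d / n) ^ n := by
        gcongr
        exact Real.add_one_le_exp _
    _ = Real.exp (a ^ d) := by
        rw [← Real.exp_nat_mul, mul_div_cancel₀ _ (Nat.cast_ne_zero.mpr hn)]

theorem exists_forall_variance_tupleCount_le (k : ℕ) (hd : d ≠ 0) {R : ℝ} (hR : 0 ≤ R) :
    ∃ K : ℝ, ∀ (n : ℕ) (S : Set (GirgΩ d k)), MeasurableSet S →
      (∀ ω ∈ S, ∀ i j, dist (ω.2.1 i) (ω.2.1 j) ≤ R / (n : ℝ) ^ (1 / (d : ℝ))) →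
      ProbabilityTheory.variance (fun ω => (tupleCount S ω : ℝ)) (girgMeasure μW d n) ≤ n * K := by
  classical
  obtain ⟨C, hC⟩ := exists_forall_pow_le_mul_two_pow (2 * k)
  refine ⟨C * (2 * Real.exp ((2 * R) ^ d)), fun n S hS hclose => ?_⟩
  have hoverlap := sum_girgMeasure_overlapping_le (n := n) (μW := μW) hS
    (D := {p | ∃ i j, p.1 i = p.2 j}) (fun p hp => (mem_filter.mp hp).2) (by positivity) hclose hC
  rw [← mul_div_assoc] at hoverlap
  refine (variance_card_filter_mem_le (measurableSet_restrictTuple_preimage hS)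
    (D := {p | ∃ i j, p.1 i = p.2 j}) fun p hp => girgMeasure_inter_of_disjoint hS ?_).trans ?_
  · simpa using hp
  simp only [measureReal_def]
  rw [← ENNReal.toReal_sum fun p _ => measure_ne_top _ _]
  refine ENNReal.toReal_le_of_le_ofReal (by positivity) (hoverlap.trans ?_)
  have hexp := one_add_div_rpow_pow_le_exp (n := n) hd (2 * R) (by positivity)
  rw [← ENNReal.ofReal_one, ← ENNReal.ofReal_add one_pos.le (by positivity),
    ← ENNReal.ofReal_pow (by positivity), ENNReal.ofReal_mul n.cast_nonneg,
    ENNReal.ofReal_mul C.cast_nonneg, ENNReal.ofReal_mul zero_le_two, ENNReal.ofReal_natCast,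
    ENNReal.ofReal_natCast, ENNReal.ofReal_ofNat]
  gcongr

end TupleCount

/-! ### The law of large numbers for patterns -/

section PatternCount

theorem ncard_injective_and {α β : Type*} [Fintype α] [Fintype β] (P : (α → β) → Prop)
    [DecidablePred P] : {v | Function.Injective v ∧ P v}.ncard = #{v : α ↪ β | P v} := by
  have himage : {v | Function.Injective v ∧ P v} = (⇑) '' ({v : α ↪ β | P v} : Set (α ↪ β)) := by
    ext v
    exact ⟨fun hv => ⟨⟨v, hv.1⟩, hv.2, rfl⟩, fun ⟨u, hu, huv⟩ => huv ▸ ⟨u.injective, hu⟩⟩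
  rw [himage, Set.ncard_image_of_injective _ DFunLike.coe_injective, ← Set.ncard_coe_finset,
    coe_filter_univ]

variable {k d n : ℕ} {s : StarKind} {H : SimpleGraph (Fin k)} {γ μb : ℝ}

/-- The number of copies of `H` in the GIRG on `n` vertices whose distance matrix, multiplied by
the typical distance scale `n ^ (1 / d)`, lies in `B`. -/
def patternCount (s : StarKind) (H : SimpleGraph (Fin k)) (γ μb : ℝ) (d : ℕ)
    (B : Set (Fin k → Fin k → ℝ)) (n : ℕ) : GirgΩ d n → ℕ :=
  tupleCount (patternEvent s H γ μb d ((n : ℝ) ^ (1 / (d : ℝ))) B)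

theorem starNTotal_eq_patternCount (hd : d ≠ 0) (ω : GirgΩ d n) :
    starNTotal s H γ μb d n ω = patternCount s H γ μb d .univ n ω := by
  classical
  have hedge : ∀ (v : Fin k ↪ Fin n) (i j : Fin k), i ≠ j → (girgEdge γ μb d n ω (v i) (v j) ↔
      ω.2.2 s(v i, v j) ≤ edgeProb γ d (ω.1 (v i) * ω.1 (v j) / μb)
        ((n : ℝ) ^ (1 / (d : ℝ)) * dist (ω.2.1 (v i)) (ω.2.1 (v j)))) := fun v i j hij => by
    rw [girgEdge, connProb_eq_edgeProb hd, and_iff_right (v.injective.ne hij)]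
  calc starNTotal s H γ μb d n ω
      = {v : Fin k → Fin n | Function.Injective v ∧
          IsPattern s H fun i j => girgEdge γ μb d n ω (v i) (v j)}.ncard := by cases s <;> rfl
    _ = #{v : Fin k ↪ Fin n | IsPattern s H fun i j => girgEdge γ μb d n ω (v i) (v j)} :=
        ncard_injective_and _
    _ = patternCount s H γ μb d .univ n ω := by
        refine congrArg card (filter_congr fun v _ => ?_)
        rw [isPattern_congr (hedge v)]
        exact (and_iff_right (Set.mem_univ _)).symm

theorem patternCount_add_compl (B : Set (Fin k → Fin k → ℝ)) (ω : GirgΩ d n) :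
    patternCount s H γ μb d B n ω + patternCount s H γ μb d Bᶜ n ω =
      patternCount s H γ μb d .univ n ω := by
  have hdisj : ∀ N : ℝ, Disjoint (patternEvent s H γ μb d N B) (patternEvent s H γ μb d N Bᶜ) :=
    fun N => Set.disjoint_left.mpr fun _ hB hBc => hBc.1 hB.1
  rw [patternCount, patternCount, ← tupleCount_union (hdisj _), patternCount]
  congr 1
  ext η
  simp [patternEvent, ← or_and_right, em]

variable {B : Set (Fin k → Fin k → ℝ)}

theorem measurable_patternCount (hB : MeasurableSet B) :
    Measurable (patternCount s H γ μb d B n) :=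
  measurable_tupleCount (measurableSet_patternEvent _ hB)

theorem memLp_patternCount {μW : Measure ℝ} [IsProbabilityMeasure μW] (hB : MeasurableSet B)
    {p : ENNReal} :
    MemLp (fun ω => (patternCount s H γ μb d B n ω : ℝ)) p (girgMeasure μW d n) := by
  have hmeas : Measurable (patternCount s H γ μb d B n) := measurable_patternCount hB
  refine .of_bound (by fun_prop) (Fintype.card (Fin k ↪ Fin n)) (.of_forall fun ω => ?_)
  rw [RCLike.norm_natCast]
  exact Nat.cast_le.mpr (card_le_univ _)

theorem dist_le_div_of_mem_patternEvent_closedBall {N R : ℝ} (hN : 0 < N) (hR : 0 ≤ R)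
    {ω : GirgΩ d k} (hω : ω ∈ patternEvent s H γ μb d N (Metric.closedBall 0 R)) (i j : Fin k) :
    dist (ω.2.1 i) (ω.2.1 j) ≤ R / N := by
  rw [le_div_iff₀' hN]
  have hnorm := (pi_norm_le_iff_of_nonneg hR).mp (mem_closedBall_zero_iff.mp hω.1) i
  exact (le_abs_self _).trans ((pi_norm_le_iff_of_nonneg hR).mp hnorm j)

theorem exists_forall_variance_patternCount_le (hd : d ≠ 0) (μW : Measure ℝ)
    [IsProbabilityMeasure μW] {R : ℝ} (hR : 0 ≤ R) : ∃ K : ℝ, ∀ n : ℕ, n ≠ 0 →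
      ProbabilityTheory.variance
        (fun ω => (patternCount s H γ μb d (Metric.closedBall 0 R) n ω : ℝ))
        (girgMeasure μW d n) ≤ n * K := by
  obtain ⟨K, hK⟩ := exists_forall_variance_tupleCount_le (μW := μW) k hd hR
  exact ⟨K, fun n hn => hK n _
    (measurableSet_patternEvent _ Metric.isClosed_closedBall.measurableSet)
    fun ω hω => dist_le_div_of_mem_patternEvent_closedBall (by positivity) hR hω⟩

end PatternCount

section LawOfLargeNumbers

variable {m d : ℕ} {s : StarKind} {H : SimpleGraph (Fin (m + 1))} {γ μb : ℝ} {μW : Measure ℝ}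
  [IsProbabilityMeasure μW] {B : Set (Fin (m + 1) → Fin (m + 1) → ℝ)}

theorem tendsto_descFactorial_div_pow (k : ℕ) :
    Tendsto (fun n : ℕ => (n.descFactorial k : ℝ) / (n : ℝ) ^ k) atTop (nhds 1) := by
  refine (Asymptotics.isEquivalent_iff_tendsto_one ?_).mp (isEquivalent_descFactorial k)
  filter_upwards [eventually_ne_atTop 0] with n hn
  exact pow_ne_zero k (Nat.cast_ne_zero.mpr hn)

theorem lintegral_patternCount_div (hd : d ≠ 0) {n : ℕ} (hn : n ≠ 0) (hB : MeasurableSet B) :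
    (∫⁻ ω, patternCount s H γ μb d B n ω ∂(girgMeasure μW d n)) / n =
      ENNReal.ofReal (n.descFactorial (m + 1) / (n : ℝ) ^ (m + 1)) *
        (ENNReal.ofReal (((n : ℝ) ^ (1 / (d : ℝ))) ^ (m * d)) * girgMeasure μW d (m + 1)
          (patternEvent s H γ μb d ((n : ℝ) ^ (1 / (d : ℝ))) B)) := by
  have hscale : ((n : ℝ) ^ (1 / (d : ℝ))) ^ (m * d) = (n : ℝ) ^ m := by
    rw [mul_comm, pow_mul, one_div, Real.rpow_inv_natCast_pow n.cast_nonneg hd]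
  have hn' : (n : ℝ) ≠ 0 := Nat.cast_ne_zero.mpr hn
  have hfactor : (n.descFactorial (m + 1) : ℝ) / (n : ℝ) ^ (m + 1) * (n : ℝ) ^ m =
      n.descFactorial (m + 1) / n := by
    field_simp
    ring
  rw [← mul_assoc, ← ENNReal.ofReal_mul (by positivity), hscale, hfactor,
    ENNReal.ofReal_div_of_pos (by positivity), ENNReal.ofReal_natCast, ENNReal.ofReal_natCast,
    ENNReal.mul_div_right_comm.symm]
  exact congrArg (· / (n : ENNReal)) (lintegral_tupleCount (measurableSet_patternEvent _ hB))

variable {L : Measure (Fin (m + 1) → Fin (m + 1) → ℝ)}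
  (hL : ∀ B, MeasurableSet B → Tendsto (fun N => ENNReal.ofReal (N ^ (m * d)) *
    girgMeasure μW d (m + 1) (patternEvent s H γ μb d N B)) atTop (nhds (L B)))
include hL

theorem tendsto_lintegral_patternCount_div (hd : d ≠ 0) (hB : MeasurableSet B) :
    Tendsto (fun n : ℕ => (∫⁻ ω, patternCount s H γ μb d B n ω ∂(girgMeasure μW d n)) / n)
      atTop (nhds (L B)) := by
  have hscale : Tendsto (fun n : ℕ => (n : ℝ) ^ (1 / (d : ℝ))) atTop atTop :=
    (tendsto_rpow_atTop (by positivity)).comp tendsto_natCast_atTop_atTop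
  have hmul := ENNReal.Tendsto.mul (ENNReal.tendsto_ofReal (tendsto_descFactorial_div_pow (m + 1)))
    (.inl (by simp)) ((hL B hB).comp hscale) (.inr (by simp))
  rw [ENNReal.ofReal_one, one_mul] at hmul
  refine hmul.congr' ?_
  filter_upwards [eventually_ne_atTop 0] with n hn
  exact (lintegral_patternCount_div hd hn hB).symm

theorem eventually_girgMeasure_le_patternCount_div_le (hd : d ≠ 0) (hB : MeasurableSet B) {t : ℝ}
    (ht : 0 < t) {ε : ENNReal} (hε : L B / ENNReal.ofReal t < ε) :
    ∀ᶠ n : ℕ in atTop,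
      girgMeasure μW d n {ω | t ≤ (patternCount s H γ μb d B n ω : ℝ) / n} ≤ ε := by
  have ht' : ENNReal.ofReal t ≠ 0 := (ENNReal.ofReal_pos.mpr ht).ne'
  filter_upwards [(ENNReal.Tendsto.div_const (tendsto_lintegral_patternCount_div hL hd hB)
    (.inr ht')).eventually_lt_const hε, eventually_ne_atTop 0] with n hn hn0
  have hcount : Measurable fun ω => (patternCount s H γ μb d B n ω : ENNReal) / n := by
    have := measurable_patternCount (s := s) (H := H) (γ := γ) (μb := μb) (d := d) (n := n) hB
    fun_prop
  calc girgMeasure μW d n {ω | t ≤ (patternCount s H γ μb d B n ω : ℝ) / n}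
      = girgMeasure μW d n
          {ω | ENNReal.ofReal t ≤ (patternCount s H γ μb d B n ω : ENNReal) / n} := by
        refine congrArg _ (Set.ext fun ω => ?_)
        rw [Set.mem_ofPred_eq, Set.mem_ofPred_eq, ← ENNReal.ofReal_natCast n,
          ← ENNReal.ofReal_natCast, ← ENNReal.ofReal_div_of_pos (by positivity),
          ENNReal.ofReal_le_ofReal_iff (by positivity)]
    _ ≤ (∫⁻ ω, (patternCount s H γ μb d B n ω : ENNReal) / n ∂(girgMeasure μW d n)) /
          ENNReal.ofReal t :=
        meas_ge_le_lintegral_div hcount.aemeasurable ht' ENNReal.ofReal_ne_top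
    _ ≤ ε := by
        simp only [div_eq_mul_inv] at hn ⊢
        rw [lintegral_mul_const' _ _ (by simpa using hn0)]
        exact hn.le

variable [IsFiniteMeasure L]

theorem tendsto_integral_patternCount_div (hd : d ≠ 0) (hB : MeasurableSet B) :
    Tendsto (fun n : ℕ => (∫ ω, (patternCount s H γ μb d B n ω : ℝ) ∂(girgMeasure μW d n)) / n)
      atTop (nhds (L.real B)) := by
  refine ((ENNReal.tendsto_toReal (measure_ne_top L B)).comp
    (tendsto_lintegral_patternCount_div hL hd hB)).congr fun n => ?_
  rw [Function.comp_apply, ENNReal.toReal_div, ENNReal.toReal_natCast,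
    integral_eq_lintegral_of_nonneg_ae (.of_forall fun ω => Nat.cast_nonneg _)
      (memLp_patternCount (p := 1) hB).aestronglyMeasurable]
  simp only [ENNReal.ofReal_natCast]

theorem tendsto_girgMeasure_patternCount_closedBall (hd : d ≠ 0) {R : ℝ} (hR : 0 ≤ R) {t : ℝ}
    (ht : 0 < t) :
    Tendsto (fun n : ℕ => girgMeasure μW d n {ω | t ≤
      |(patternCount s H γ μb d (Metric.closedBall 0 R) n ω : ℝ) / n -
        L.real (Metric.closedBall 0 R)|}) atTop (nhds 0) := by
  have hball : MeasurableSet (Metric.closedBall (0 : Fin (m + 1) → Fin (m + 1) → ℝ) R) :=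
    Metric.isClosed_closedBall.measurableSet
  obtain ⟨K, hK⟩ := exists_forall_variance_patternCount_le (s := s) (H := H) (γ := γ) (μb := μb)
    hd μW hR
  have hbound : Tendsto (fun n : ℕ => ENNReal.ofReal (K / (t / 2) ^ 2 / n)) atTop (nhds 0) :=
    ENNReal.ofReal_zero ▸ ENNReal.tendsto_ofReal (tendsto_const_div_atTop_nhds_zero_nat _)
  refine tendsto_of_tendsto_of_tendsto_of_le_of_le' tendsto_const_nhds hbound
    (.of_forall fun _ => zero_le) ?_
  filter_upwards [(tendsto_integral_patternCount_div hL hd hball).eventually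
    (Metric.ball_mem_nhds _ (half_pos ht)), eventually_ne_atTop 0] with n hmean hn
  have hn' : (0 : ℝ) < n := by positivity
  rw [Real.dist_eq] at hmean
  set X := fun ω => (patternCount s H γ μb d (Metric.closedBall 0 R) n ω : ℝ)
  set E := ∫ ω, X ω ∂(girgMeasure μW d n)
  have hdev : ∀ ω, t ≤ |X ω / n - L.real (Metric.closedBall 0 R)| → n * (t / 2) ≤ |X ω - E| := by
    intro ω hω
    have htri := abs_sub_le (X ω / n) (E / n) (L.real (Metric.closedBall 0 R))
    rw [← sub_div, abs_div, abs_of_pos hn'] at htri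
    rw [← le_div_iff₀' hn']
    linarith
  calc girgMeasure μW d n {ω | t ≤ |X ω / n - L.real (Metric.closedBall 0 R)|}
      ≤ girgMeasure μW d n {ω | n * (t / 2) ≤ |X ω - E|} := measure_mono hdev
    _ ≤ ENNReal.ofReal (ProbabilityTheory.variance X (girgMeasure μW d n) / (n * (t / 2)) ^ 2) :=
        ProbabilityTheory.meas_ge_le_variance_div_sq (memLp_patternCount hball) (by positivity)
    _ ≤ ENNReal.ofReal (n * K / (n * (t / 2)) ^ 2) := by gcongr; exact hK n hn
    _ = ENNReal.ofReal (K / (t / 2) ^ 2 / n) := by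
        congr 1
        field_simp

theorem tendsto_girgMeasure_starNTotal (hd : d ≠ 0) {δ : ℝ} (hδ : 0 < δ) :
    Tendsto (fun n : ℕ => girgMeasure μW d n
      {ω | δ < |(starNTotal s H γ μb d n ω : ℝ) / n - L.real .univ|}) atTop (nhds 0) := by
  rw [ENNReal.tendsto_nhds_zero]
  intro ε hε
  have hδ3 : 0 < δ / 3 := by positivity
  have htight : Tendsto (fun R => L (Metric.closedBall 0 R)ᶜ) atTop (nhds 0) := by
    simpa using tendsto_measure_compl_closedBall_of_isTightMeasureSet
      (isTightMeasureSet_singleton (μ := L)) 0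
  obtain ⟨R, hLR, hR⟩ := ((htight.eventually_lt_const (lt_min (ENNReal.ofReal_pos.mpr hδ3)
    (ENNReal.mul_pos (ENNReal.half_pos hε.ne').ne' (ENNReal.ofReal_pos.mpr hδ3).ne'))).and
      (eventually_ge_atTop 0)).exists
  obtain ⟨hLδ, hLε⟩ := lt_min_iff.mp hLR
  set B := Metric.closedBall (0 : Fin (m + 1) → Fin (m + 1) → ℝ) R
  have hB : MeasurableSet B := Metric.isClosed_closedBall.measurableSet
  have hLδ' : L.real Bᶜ < δ / 3 := ENNReal.toReal_lt_of_lt_ofReal hLδ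
  have hball := tendsto_girgMeasure_patternCount_closedBall hL hd hR hδ3
  filter_upwards [ENNReal.tendsto_nhds_zero.mp hball (ε / 2) (ENNReal.half_pos hε.ne'),
    eventually_girgMeasure_le_patternCount_div_le hL hd hB.compl hδ3
      (ENNReal.div_lt_of_lt_mul hLε)] with n hclose hfar
  refine (measure_mono fun ω hω => ?_).trans <|
    (measure_union_le _ _).trans <| (add_le_add hclose hfar).trans (ENNReal.add_halves ε).le
  by_contra hcon
  simp only [Set.mem_union, Set.mem_ofPred_eq, not_or, not_le] at hcon hω
  rw [starNTotal_eq_patternCount hd, ← patternCount_add_compl B ω, Nat.cast_add, add_div,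
    ← measureReal_add_measureReal_compl hB, add_sub_add_comm] at hω
  have htri := abs_add_le
    ((patternCount s H γ μb d B n ω : ℝ) / n - L.real B)
    ((patternCount s H γ μb d Bᶜ n ω : ℝ) / n - L.real Bᶜ)
  have htail := abs_sub_lt_of_nonneg_of_lt (by positivity) hcon.2 measureReal_nonneg hLδ'
  linarith [hcon.1]

end LawOfLargeNumbers

section Main

variable {μW : Measure ℝ} [IsProbabilityMeasure μW]

theorem exists_tendsto_girgMeasure_starNTotal {m d : ℕ} {H : SimpleGraph (Fin (m + 1))}
    {σ : Equiv.Perm (Fin (m + 1))} (hσ : ∀ i, H.Adj (σ i) (σ (i + 1))) (hd : d ≠ 0) {γ μb : ℝ}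
    (hγ : 1 < γ) (hμ : 0 < μb) (hpos : ∀ᵐ x ∂μW, 0 < x)
    (hmoment : ∫⁻ x, ENNReal.ofReal x ^ (2 * m / (m + 1) : ℝ) ∂μW < ⊤) (s : StarKind) :
    ∃ I : ℝ, 0 < I ∧ ∀ δ : ℝ, 0 < δ →
      Tendsto (fun n : ℕ => girgMeasure μW d n
          {ω | δ < |(starNTotal s H γ μb d n ω : ℝ) / n - I|}) atTop (nhds 0) := by
  have := isFiniteMeasure_limitMeasure (s := s) hσ hd hγ hμ hpos hmoment
  exact ⟨(limitMeasure s H γ μb d μW σ).real .univ,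
    ENNReal.toReal_pos (limitMeasure_univ_pos hpos σ hd (one_pos.trans hγ) hμ).ne'
      (measure_ne_top _ _),
    fun δ hδ => tendsto_girgMeasure_starNTotal
      (fun B hB => tendsto_girgMeasure_patternEvent hσ hd hγ hμ hpos hmoment hB) hd hδ⟩

theorem WeightTail.lintegral_ofReal_rpow_lt_top {τ c : ℝ} (hW : WeightTail τ c μW) {m : ℕ}
    (hm : m ≠ 0) (hτ : (m + 1) * (3 - τ) < 2) :
    ∫⁻ x, ENNReal.ofReal x ^ (2 * m / (m + 1) : ℝ) ∂μW < ⊤ := by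
  have hp : (0 : ℝ) < 2 * m / (m + 1) := by positivity
  have hpτ : (2 * m / (m + 1) : ℝ) < τ - 1 := by
    rw [div_lt_iff₀ (by positivity)]
    linarith
  refine (lintegral_congr_ae ?_).trans_lt (hW.lintegral_rpow_lt_top hp hpτ)
  filter_upwards [hW.ae_one_le] with x hx
  exact ENNReal.ofReal_rpow_of_pos (by linarith)

theorem girg_hamiltonian_geometric_phase_general {k d : ℕ} [NeZero k] (hd : 1 ≤ d) {τ γ c : ℝ}
    (hγ : 1 < γ) (hW : WeightTail τ c μW) {H : SimpleGraph (Fin k)}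
    (hH : IsHamiltonianPattern H) (hk : k * (3 - τ) < 2) (s : StarKind) :
    starIsOptimal s τ γ d H (fun _ => 0) (fun _ _ => -(1 / (d : ℝ))) ∧
    ∃ I : ℝ, 0 < I ∧ ∀ δ : ℝ, 0 < δ →
      Tendsto (fun n : ℕ => girgMeasure μW d n
          {ω | δ < |(starNTotal s H γ (wMean μW) d n ω : ℝ) / n - I|})
        atTop (nhds 0) := by
  obtain ⟨m, rfl⟩ := Nat.exists_eq_succ_of_ne_zero (NeZero.ne k)
  obtain ⟨σ, hσ : ∀ i : Fin (m + 1), H.Adj (σ i) (σ (i + 1))⟩ := hH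
  have hm : m ≠ 0 := by
    rintro rfl
    exact H.irrefl (Subsingleton.elim (σ (0 + 1)) (σ 0) ▸ hσ 0)
  have hτ : 2 < τ := by
    by_contra! hτ
    have : (1 : ℝ) ≤ m := Nat.one_le_cast.mpr (Nat.pos_of_ne_zero hm)
    push_cast at hk
    nlinarith
  have hd' : d ≠ 0 := Nat.ne_of_gt hd
  exact ⟨starIsOptimal_geometric hd' (by linarith) hγ.le hσ (by push_cast at hk; exact hk.le) s,
    exists_tendsto_girgMeasure_starNTotal hσ hd' hγ (hW.wMean_pos hτ)
      (hW.ae_one_le.mono fun x hx => one_pos.trans_le hx)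
      (hW.lintegral_ofReal_rpow_lt_top hm (by push_cast at hk; exact hk)) s⟩

end Main

/-- Theorem `hamiltonian`(i), geometric regime: for a Hamiltonian
pattern `H` of size `k < 1 + 1/(3-τ)`, the vector `(α,β) ≡ (0, -1/d)` solves the
optimization problem and `N^⋆(H)/n` converges in probability to a positive constant. -/
theorem girg_hamiltonian_geometric_phase
    {k d : ℕ} [NeZero k] (hd : 1 ≤ d) (τ γ c : ℝ) (hτ : τ ∈ Set.Ioo (2:ℝ) 3) (hγ : 1 < γ)
    (μW : Measure ℝ) [IsProbabilityMeasure μW] (hW : WeightTail τ c μW)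
    (H : SimpleGraph (Fin k)) (hH : IsHamiltonianPattern H)
    (hk : (k : ℝ) < 1 + 1 / (3 - τ)) (s : StarKind) :
    starIsOptimal s τ γ d H (fun _ => 0) (fun _ _ => -(1 / (d : ℝ))) ∧
    ∃ I : ℝ, 0 < I ∧ ∀ δ : ℝ, 0 < δ →
      Tendsto (fun n : ℕ => girgMeasure μW d n
          {ω | δ < |(starNTotal s H γ (wMean μW) d n ω : ℝ) / n - I|})
        atTop (nhds 0) := by
  refine girg_hamiltonian_geometric_phase_general hd hγ hW hH ?_ s
  have hτ3 : 0 < 3 - τ := sub_pos.mpr hτ.2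
  have hk' : (k : ℝ) * (3 - τ) < (1 + 1 / (3 - τ)) * (3 - τ) := mul_lt_mul_of_pos_right hk hτ3
  rw [add_mul, one_mul, div_mul_cancel₀ _ hτ3.ne'] at hk'
  linarith [hτ.1]

end
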